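/- Let R be a commutative noetherian ring and let X be a resolving subcategory of mod R contained in LPD(R), the subcategory of modules M with pd_{R_p} M_p < ∞ for all primes p. Then for a finitely generated R-module M, the following are equivalent: (1) M ∈ X; (2) for every p ∈ NF(M) there exists X ∈ X such that pd_{R_p} M_p ≤ pd_{R_p} X_p. -/

import Mathlib

universe u

open CategoryTheory

namespace ResolvPaper

variable (R : Type u) [CommRing R]

/-- `IsSES f g` means `0 → A → B → C → 0` is a short exact sequence. -/
def IsSES {R : Type u} [CommRing R] {A B C : Type u} [AddCommGroup A] [Module R A]
    [AddCommGroup B] [Module R B] [AddCommGroup C] [Module R C]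
    (f : A →ₗ[R] B) (g : B →ₗ[R] C) : Prop :=
  Function.Injective f ∧ Function.Surjective g ∧ LinearMap.range f = LinearMap.ker g

/-- A resolving subcategory of `mod R`, viewed as a set of bundled modules
closed under isomorphism, containing the finitely generated projective modules, and closed
under direct summands, extensions and syzygies. -/
structure IsResolving (𝒳 : Set (ModuleCat.{u} R)) : Prop where
  fg : ∀ M ∈ 𝒳, Module.Finite R M
  iso_closed : ∀ M N : ModuleCat.{u} R, Nonempty (M ≃ₗ[R] N) → M ∈ 𝒳 → N ∈ 𝒳
  proj_mem : ∀ M : ModuleCat.{u} R, Module.Finite R M → Module.Projective R M → M ∈ 𝒳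
  summand_closed : ∀ M N : ModuleCat.{u} R, ModuleCat.of R (↥M × ↥N) ∈ 𝒳 → M ∈ 𝒳
  ext_closed : ∀ (A B C : ModuleCat.{u} R) (f : A →ₗ[R] B) (g : B →ₗ[R] C),
    IsSES f g → A ∈ 𝒳 → C ∈ 𝒳 → B ∈ 𝒳
  syzygy_closed : ∀ (K P M : ModuleCat.{u} R) (f : K →ₗ[R] P) (g : P →ₗ[R] M),
    IsSES f g → Module.Finite R K → Module.Finite R P → Module.Projective R P →
    M ∈ 𝒳 → K ∈ 𝒳

/-- The resolving closure: the smallest resolving subcategory containing `S`. -/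
def resClosure (S : Set (ModuleCat.{u} R)) : Set (ModuleCat.{u} R) :=
  ⋂₀ {𝒳 | IsResolving R 𝒳 ∧ S ⊆ 𝒳}

/-- An extension-closed subcategory of `mod R`: closed under isomorphism,
direct summands and extensions. -/
def IsExtClosed (𝒳 : Set (ModuleCat.{u} R)) : Prop :=
  (∀ M N : ModuleCat.{u} R, Nonempty (M ≃ₗ[R] N) → M ∈ 𝒳 → N ∈ 𝒳) ∧
  (∀ M N : ModuleCat.{u} R, ModuleCat.of R (↥M × ↥N) ∈ 𝒳 → M ∈ 𝒳) ∧
  (∀ (A B C : ModuleCat.{u} R) (f : A →ₗ[R] B) (g : B →ₗ[R] C),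
    IsSES f g → A ∈ 𝒳 → C ∈ 𝒳 → B ∈ 𝒳)

/-- The extension closure of a set of modules. -/
def extClosure (S : Set (ModuleCat.{u} R)) : Set (ModuleCat.{u} R) :=
  ⋂₀ {𝒳 | IsExtClosed R 𝒳 ∧ S ⊆ 𝒳}

/-- `add R`: direct summands of finite free modules. -/
def addR : Set (ModuleCat.{u} R) :=
  {M | ∃ (n : ℕ) (N : ModuleCat.{u} R), Nonempty ((↥M × ↥N) ≃ₗ[R] (Fin n → R))}

/-- `pdLE n M` : the projective dimension of `M` is at most `n`. -/
def pdLE : ℕ → ModuleCat.{u} R → Prop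
  | 0, M => Module.Projective R M
  | n+1, M => ∃ (K P : ModuleCat.{u} R) (f : K →ₗ[R] P) (g : P →ₗ[R] M),
      Module.Finite R P ∧ Module.Projective R P ∧ IsSES f g ∧ pdLE n K

/-- The projective dimension, an element of `WithBot ℕ∞`; the zero module
has projective dimension `⊥ = -∞`. -/
noncomputable def pdim (M : ModuleCat.{u} R) : WithBot ℕ∞ :=
  sInf {x : WithBot ℕ∞ | (x = ⊥ ∧ Subsingleton M) ∨ ∃ n : ℕ, x = (n : ℕ∞) ∧ pdLE R n M}

/-- The depth of `M` with respect to the ideal `I`: the supremum of lengths of weakly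
`M`-regular sequences contained in `I`.  The zero module has depth `∞`. -/
noncomputable def depthE (I : Ideal R) (M : Type u) [AddCommGroup M] [Module R M] : ℕ∞ :=
  sSup {x : ℕ∞ | ∃ rs : List R, (∀ r ∈ rs, r ∈ I) ∧
    RingTheory.Sequence.IsWeaklyRegular M rs ∧ x = rs.length}

/-- The grade of an ideal: the length of a maximal `R`-regular sequence in `I`. -/
noncomputable def gradeE (I : Ideal R) : ℕ∞ := depthE R I R

/-- A grade consistent function on `Spec R`. -/
def GradeConsistent (f : PrimeSpectrum R → ℕ) : Prop :=
  (∀ p : PrimeSpectrum R, (f p : ℕ∞) ≤ gradeE R p.asIdeal) ∧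
  (∀ p q : PrimeSpectrum R, p.asIdeal ≤ q.asIdeal → f p ≤ f q)

/-- The localization of a module at a prime, as a module over the local ring `R_p`. -/
noncomputable abbrev localizeM (p : PrimeSpectrum R) (M : ModuleCat.{u} R) :
    ModuleCat.{u} (Localization.AtPrime p.asIdeal) :=
  ModuleCat.of (Localization.AtPrime p.asIdeal) (LocalizedModule p.asIdeal.primeCompl M)

/-- `pd_{R_p} M_p`. -/
noncomputable def localPdim (p : PrimeSpectrum R) (M : ModuleCat.{u} R) : WithBot ℕ∞ :=
  pdim (Localization.AtPrime p.asIdeal) (localizeM R p M)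

/-- `depth_{R_p} M_p`. -/
noncomputable def localDepth (p : PrimeSpectrum R) (M : ModuleCat.{u} R) : ℕ∞ :=
  depthE (Localization.AtPrime p.asIdeal)
    (IsLocalRing.maximalIdeal (Localization.AtPrime p.asIdeal))
    (LocalizedModule p.asIdeal.primeCompl M)

/-- The height of a prime ideal. -/
noncomputable def heightE (p : PrimeSpectrum R) : ℕ∞ := Order.height p

/-- `PD(R)` : finitely generated modules of finite projective dimension. -/
def PDcat : Set (ModuleCat.{u} R) :=
  {M | Module.Finite R M ∧ ∃ n : ℕ, pdLE R n M}

/-- `MCM(R)` : maximal Cohen-Macaulay modules. -/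
def MCMcat : Set (ModuleCat.{u} R) :=
  {M | Module.Finite R M ∧ ∀ p : PrimeSpectrum R, heightE R p ≤ localDepth R p M}

/-- The nonfree locus of a module. -/
def NF (M : ModuleCat.{u} R) : Set (PrimeSpectrum R) :=
  {p | ¬ Module.Free (Localization.AtPrime p.asIdeal) (LocalizedModule p.asIdeal.primeCompl M)}

/-- The infinite projective dimension locus of a module. -/
def IPD (M : ModuleCat.{u} R) : Set (PrimeSpectrum R) :=
  {p | localPdim R p M = (⊤ : WithBot ℕ∞)}

/-- The infinite projective dimension locus of a collection of modules. -/
def IPDcat (𝒳 : Set (ModuleCat.{u} R)) : Set (PrimeSpectrum R) :=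
  ⋃ M ∈ 𝒳, IPD R M

/-- The modules in `mod R` whose infinite projective dimension locus lies in `W`. -/
def IPDinv (W : Set (PrimeSpectrum R)) : Set (ModuleCat.{u} R) :=
  {M | Module.Finite R M ∧ IPD R M ⊆ W}

/-- A specialization closed subset of `Spec R`. -/
def SpecClosed (W : Set (PrimeSpectrum R)) : Prop :=
  ∀ p ∈ W, ∀ q : PrimeSpectrum R, p.asIdeal ≤ q.asIdeal → q ∈ W

/-- Membership in `add 𝒳_p`: direct summands of localizations of finite direct sums
of members of `𝒳`. -/
def memAddLocal (𝒳 : Set (ModuleCat.{u} R)) (p : PrimeSpectrum R)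
    (N : ModuleCat.{u} (Localization.AtPrime p.asIdeal)) : Prop :=
  ∃ (n : ℕ) (X : Fin n → ModuleCat.{u} R), (∀ i, X i ∈ 𝒳) ∧
    ∃ (N' : ModuleCat.{u} (Localization.AtPrime p.asIdeal)),
      Nonempty ((↥N × ↥N') ≃ₗ[Localization.AtPrime p.asIdeal]
        ((i : Fin n) → LocalizedModule p.asIdeal.primeCompl (X i)))

/-- `K` is an `n`-th syzygy of `M` computed from a minimal free resolution over the
local ring `S`. -/
def IsMinSyz (S : Type u) [CommRing S] [IsLocalRing S] :
    ℕ → ModuleCat.{u} S → ModuleCat.{u} S → Prop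
  | 0, M, K => Nonempty (K ≃ₗ[S] M)
  | n+1, M, K => ∃ (F : ModuleCat.{u} S) (g : F →ₗ[S] M) (K' : ModuleCat.{u} S)
      (i : K' →ₗ[S] F),
      Module.Finite S F ∧ Module.Free S F ∧ Function.Surjective g ∧
      (LinearMap.ker g ≤ (IsLocalRing.maximalIdeal S) • (⊤ : Submodule S F)) ∧
      Function.Injective i ∧ LinearMap.range i = LinearMap.ker g ∧
      IsMinSyz S n K' K

/-- `K` is an `n`-th syzygy of `M` in some projective resolution (over any ring). -/
def IsSyz : ℕ → ModuleCat.{u} R → ModuleCat.{u} R → Prop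
  | 0, M, K => Nonempty (K ≃ₗ[R] M)
  | n+1, M, K => ∃ (F : ModuleCat.{u} R) (g : F →ₗ[R] M) (K' : ModuleCat.{u} R)
      (i : K' →ₗ[R] F),
      Module.Finite R F ∧ Module.Projective R F ∧ Function.Surjective g ∧
      Function.Injective i ∧ LinearMap.range i = LinearMap.ker g ∧
      IsSyz n K' K

/-- `T` is (isomorphic to) the Auslander transpose of `M`, computed from a minimal
free presentation over the local ring `S`. -/
def IsTranspose (S : Type u) [CommRing S] [IsLocalRing S] (M T : ModuleCat.{u} S) : Prop :=
  ∃ (F1 F0 : ModuleCat.{u} S) (d : F1 →ₗ[S] F0) (e : F0 →ₗ[S] M),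
    Module.Finite S F0 ∧ Module.Free S F0 ∧ Module.Finite S F1 ∧ Module.Free S F1 ∧
    Function.Surjective e ∧ LinearMap.range d = LinearMap.ker e ∧
    LinearMap.ker e ≤ (IsLocalRing.maximalIdeal S) • (⊤ : Submodule S F0) ∧
    LinearMap.ker d ≤ (IsLocalRing.maximalIdeal S) • (⊤ : Submodule S F1) ∧
    Nonempty (T ≃ₗ[S] ((Module.Dual S F1) ⧸ LinearMap.range d.dualMap))

/-- `T` is (isomorphic to) `Tr Ω^n M` over the local ring `S`. -/
def IsTrOmega (S : Type u) [CommRing S] [IsLocalRing S] (n : ℕ) (M T : ModuleCat.{u} S) :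
    Prop :=
  ∃ K : ModuleCat.{u} S, IsMinSyz S n M K ∧ IsTranspose S K T

/-- Resolving subcategory `𝒳` is dominant on `W ⊆ Spec R`. -/
def DominantOn (𝒳 : Set (ModuleCat.{u} R)) (W : Set (PrimeSpectrum R)) : Prop :=
  ∀ p ∈ W, ∃ (n : ℕ) (K : ModuleCat.{u} (Localization.AtPrime p.asIdeal)),
    IsMinSyz (Localization.AtPrime p.asIdeal) n
      (ModuleCat.of (Localization.AtPrime p.asIdeal)
        (IsLocalRing.ResidueField (Localization.AtPrime p.asIdeal))) K ∧
    memAddLocal R 𝒳 p K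

/-- Dominant resolving subcategory. -/
def Dominant (𝒳 : Set (ModuleCat.{u} R)) : Prop := DominantOn R 𝒳 Set.univ

/-- A (noetherian) local ring is Cohen-Macaulay if its depth equals its Krull dimension. -/
def IsCMLocalRing (S : Type u) [CommRing S] [IsLocalRing S] : Prop :=
  IsNoetherianRing S ∧
    ((depthE S (IsLocalRing.maximalIdeal S) S : WithBot ℕ∞) = ringKrullDim S)

/-- A regular local ring: a noetherian local ring whose maximal ideal is generated by
`dim S` elements. -/
def IsRegLocalRing (S : Type u) [CommRing S] [IsLocalRing S] : Prop :=
  IsNoetherianRing S ∧ ∃ s : Finset S,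
    Ideal.span (s : Set S) = IsLocalRing.maximalIdeal S ∧
    ringKrullDim S = (s.card : WithBot ℕ∞)

/-- The singular locus of `R`. -/
def SingLocus : Set (PrimeSpectrum R) :=
  {p | ¬ IsRegLocalRing (Localization.AtPrime p.asIdeal)}

/-- A hypersurface local ring: the completion is a quotient of a regular local ring by
one element. -/
def IsHypersurfaceLocalRing (S : Type u) [CommRing S] [IsLocalRing S] : Prop :=
  ∃ (T : Type u) (_ : CommRing T) (_ : IsLocalRing T) (f : T),
    IsRegLocalRing T ∧
    Nonempty ((AdicCompletion (IsLocalRing.maximalIdeal S) S) ≃+* (T ⧸ Ideal.span {f}))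

/-- A complete intersection local ring: the completion is a quotient of a regular local
ring by a regular sequence. -/
def IsCompleteIntersectionLocalRing (S : Type u) [CommRing S] [IsLocalRing S] : Prop :=
  ∃ (T : Type u) (_ : CommRing T) (_ : IsLocalRing T) (rs : List T),
    IsRegLocalRing T ∧ RingTheory.Sequence.IsRegular T rs ∧
    Nonempty ((AdicCompletion (IsLocalRing.maximalIdeal S) S) ≃+*
      (T ⧸ Ideal.ofList rs))

/-- The subquotient `A / (A ⊓ B)` of two submodules, used for homology. -/
def subquot {S M : Type u} [CommRing S] [AddCommGroup M] [Module S M]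
    (A B : Submodule S M) : Type u :=
  A ⧸ (B.comap A.subtype)

noncomputable instance {S M : Type u} [CommRing S] [AddCommGroup M] [Module S M]
    (A B : Submodule S M) : AddCommGroup (subquot A B) :=
  inferInstanceAs (AddCommGroup (A ⧸ (B.comap A.subtype)))

noncomputable instance {S M : Type u} [CommRing S] [AddCommGroup M] [Module S M]
    (A B : Submodule S M) : Module S (subquot A B) :=
  inferInstanceAs (Module S (A ⧸ (B.comap A.subtype)))

/-- `E` is (isomorphic to) `Ext^{j+1}_S(M, S)`, computed from a finite free resolution. -/
def IsExtPos (S : Type u) [CommRing S] (j : ℕ) (M E : ModuleCat.{u} S) : Prop :=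
  ∃ (F : ℕ → ModuleCat.{u} S) (d : ∀ i : ℕ, (F (i+1) : Type u) →ₗ[S] F i)
    (e : (F 0 : Type u) →ₗ[S] M),
    (∀ i, Module.Finite S (F i)) ∧ (∀ i, Module.Free S (F i)) ∧
    Function.Surjective e ∧ LinearMap.range (d 0) = LinearMap.ker e ∧
    (∀ i, LinearMap.range (d (i+1)) = LinearMap.ker (d i)) ∧
    Nonempty (E ≃ₗ[S]
      subquot (LinearMap.ker ((d (j+1)).dualMap)) (LinearMap.range ((d j).dualMap)))

/-- `T` is (isomorphic to) `Tor_n^S(M, N)`, computed from a projective resolution of `M`. -/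
def IsTor (S : Type u) [CommRing S] (n : ℕ) (M N T : ModuleCat.{u} S) : Prop :=
  ∃ (F : ℕ → ModuleCat.{u} S) (d : ∀ i : ℕ, (F (i+1) : Type u) →ₗ[S] F i)
    (e : (F 0 : Type u) →ₗ[S] M),
    (∀ i, Module.Projective S (F i)) ∧
    Function.Surjective e ∧ LinearMap.range (d 0) = LinearMap.ker e ∧
    (∀ i, LinearMap.range (d (i+1)) = LinearMap.ker (d i)) ∧
    (match n with
      | 0 => Nonempty (T ≃ₗ[S] TensorProduct S M N)
      | (j+1) => Nonempty (T ≃ₗ[S]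
          subquot (LinearMap.ker (LinearMap.rTensor (↥N) (d j)))
            (LinearMap.range (LinearMap.rTensor (↥N) (d (j+1))))))

/-- `idLE n M` : the injective dimension of `M` is at most `n`. -/
def idLE (S : Type u) [CommRing S] : ℕ → ModuleCat.{u} S → Prop
  | 0, M => Module.Injective S M
  | n+1, M => ∃ (I C : ModuleCat.{u} S) (f : M →ₗ[S] I) (g : I →ₗ[S] C),
      IsSES f g ∧ Module.Injective S I ∧ idLE S n C

/-- `PD_0^n(R)` over a local ring: modules of projective dimension at most `n` that are
free on the punctured spectrum. -/
def PD0n [IsLocalRing R] (n : ℕ) : Set (ModuleCat.{u} R) :=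
  {M | Module.Finite R M ∧ pdLE R n M ∧
    ∀ p : PrimeSpectrum R, p.asIdeal ≠ IsLocalRing.maximalIdeal R →
      Module.Free (Localization.AtPrime p.asIdeal) (LocalizedModule p.asIdeal.primeCompl M)}

/-- `PD_0(R)` over a local ring: modules of finite projective dimension that are
free on the punctured spectrum. -/
def PD0 [IsLocalRing R] : Set (ModuleCat.{u} R) :=
  {M | Module.Finite R M ∧ (∃ n : ℕ, pdLE R n M) ∧
    ∀ p : PrimeSpectrum R, p.asIdeal ≠ IsLocalRing.maximalIdeal R →
      Module.Free (Localization.AtPrime p.asIdeal) (LocalizedModule p.asIdeal.primeCompl M)}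

/-- The residue field of a local ring, as a bundled module. -/
noncomputable abbrev residueMod (S : Type u) [CommRing S] [IsLocalRing S] : ModuleCat.{u} S :=
  ModuleCat.of S (IsLocalRing.ResidueField S)

/-- `LPD(R)`: the modules which have finite projective dimension locally at every prime. -/
def LPDcat : Set (ModuleCat.{u} R) :=
  {M | Module.Finite R M ∧ ∀ p : PrimeSpectrum R, localPdim R p M ≠ (⊤ : WithBot ℕ∞)}

/-!
Fix a finitely generated module `M` and let `I` be the ideal of those `s` for which `s • id_M`
factors through an object of `𝒳`; then `M ∈ 𝒳` as soon as `I` is the unit ideal. Otherwise localize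
at a minimal prime `q` over `I`. The retracts of localizations of objects of `𝒳` form a resolving
subcategory of `mod R_q`, and a power of every element of the maximal ideal acts on `M_q` through
it. A local theorem puts `M_q` in it, and clearing denominators gives an element of `I` outside
`q`, a contradiction.

For the local theorem, let `n ≤ N` be the top degrees in which `Ext(M, R)` and `Ext(X, R)` do not
vanish, that is, the projective dimensions of `M` and of the given `X ∈ 𝒳`. As `pd X = N`, one has
`Ext^j(k, R) = 0` for `j < N`. Replacing a module `A` by the fibre product of a free cover `F → A`
with `x : A → A` keeps its top degree and makes `x²` kill its positive `Ext`; repeating this for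
generators `x` of the maximal ideal `𝔪`, we may assume that the positive `Ext` of `M` and `X` is
`𝔪`-torsion. Let `T_i`, for `1 ≤ i ≤ N`, be the transpose of `Ω^{i-1} k`. Its only positive `Ext`
is in degree `i`, and if `Ext^j(A, R) = 0` for `0 < j < i`, every socle element of `Ext^i(A, R)`
is the pullback of a fixed class on `T_i` along some `A → T_i`. Passing to the fibre product of `A`
and a free cover of `T_i` kills this element, so `M` is built from `T_1, …, T_n` and free modules by
extensions and direct summands. Conversely the class on `T_i` is the pullback of a class on a syzygy
of `X`, which shows in the same way, by induction on `i`, that `T_i ∈ 𝒳` for `i ≤ N`.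
-/

section Development

open Abelian IsLocalRing TensorProduct

variable {R}
variable {A B C D K L M N P Q X Y Z : Type u}
  [AddCommGroup A] [Module R A] [AddCommGroup B] [Module R B] [AddCommGroup C] [Module R C]
  [AddCommGroup D] [Module R D] [AddCommGroup K] [Module R K] [AddCommGroup L] [Module R L]
  [AddCommGroup M] [Module R M] [AddCommGroup N] [Module R N] [AddCommGroup P] [Module R P]
  [AddCommGroup Q] [Module R Q] [AddCommGroup X] [Module R X] [AddCommGroup Y] [Module R Y]
  [AddCommGroup Z] [Module R Z]
variable {j : ℕ}

/-! ### Short exact sequences, fibre products and fibre coproducts -/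

theorem IsSES.exact {f : A →ₗ[R] B} {g : B →ₗ[R] C} (h : IsSES f g) : Function.Exact f g :=
  LinearMap.exact_iff.2 h.2.2.symm

theorem IsSES.apply_apply_eq_zero {f : A →ₗ[R] B} {g : B →ₗ[R] C} (h : IsSES f g) (a : A) :
    g (f a) = 0 :=
  h.exact.apply_apply_eq_zero a

theorem IsSES.exists_apply_eq {f : A →ₗ[R] B} {g : B →ₗ[R] C} (h : IsSES f g) {b : B}
    (hb : g b = 0) : ∃ a, f a = b :=
  (h.exact b).1 hb

theorem isSES_of_exact {f : A →ₗ[R] B} {g : B →ₗ[R] C} (hf : Function.Injective f)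
    (hg : Function.Surjective g) (hfg : Function.Exact f g) : IsSES f g :=
  ⟨hf, hg, hfg.linearMap_ker_eq.symm⟩

theorem IsSES.exists_lift {f : A →ₗ[R] B} {g : B →ₗ[R] C} (h : IsSES f g) (k : D →ₗ[R] B)
    (hk : ∀ d, g (k d) = 0) : ∃ l : D →ₗ[R] A, ∀ d, f (l d) = k d := by
  let e := LinearEquiv.ofInjective f h.1
  let k' := k.codRestrict (LinearMap.range f) fun d => h.exists_apply_eq (hk d)
  exact ⟨e.symm ∘ₗ k', fun d => congrArg Subtype.val (e.apply_symm_apply (k' d))⟩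

theorem IsSES.exists_desc {f : A →ₗ[R] B} {g : B →ₗ[R] C} (h : IsSES f g) (k : B →ₗ[R] D)
    (hk : ∀ a, k (f a) = 0) : ∃ l : C →ₗ[R] D, ∀ b, l (g b) = k b := by
  have hker : LinearMap.ker g ≤ LinearMap.ker k := fun b hb => by
    obtain ⟨a, rfl⟩ := h.exists_apply_eq hb
    exact hk a
  let e := g.quotKerEquivOfSurjective h.2.1
  refine ⟨(LinearMap.ker g).liftQ k hker ∘ₗ e.symm, fun b => ?_⟩
  have he : e.symm (g b) = (LinearMap.ker g).mkQ b := e.symm_apply_eq.2 rfl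
  simp [he]

theorem isSES_ker_subtype (g : B →ₗ[R] C) (hg : Function.Surjective g) :
    IsSES (LinearMap.ker g).subtype g :=
  ⟨Subtype.val_injective, hg, by simp⟩

theorem exists_isSES_free_cover (M : Type u) [AddCommGroup M] [Module R M] [Module.Finite R M] :
    ∃ (n : ℕ) (g : (Fin n → R) →ₗ[R] M), IsSES (LinearMap.ker g).subtype g := by
  obtain ⟨n, g, hg⟩ := Module.Finite.exists_fin' R M
  exact ⟨n, g, isSES_ker_subtype g hg⟩

theorem isSES_inl_snd : IsSES (LinearMap.inl R A B) (LinearMap.snd R A B) :=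
  isSES_of_exact LinearMap.inl_injective LinearMap.snd_surjective .inl_snd

/-- The fibre product `A ×_C B` of `f : A → C` and `g : B → C`. -/
abbrev FiberProd (f : A →ₗ[R] C) (g : B →ₗ[R] C) : Type u :=
  ↥(LinearMap.eqLocus (f ∘ₗ LinearMap.fst R A B) (g ∘ₗ LinearMap.snd R A B))

namespace FiberProd

variable (f : A →ₗ[R] C) (g : B →ₗ[R] C)

/-- The first projection of a fibre product. -/
abbrev fst : FiberProd f g →ₗ[R] A :=
  LinearMap.fst R A B ∘ₗ Submodule.subtype _

/-- The second projection of a fibre product. -/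
abbrev snd : FiberProd f g →ₗ[R] B :=
  LinearMap.snd R A B ∘ₗ Submodule.subtype _

/-- The map into a fibre product given by the universal property. -/
def lift (a : D →ₗ[R] A) (b : D →ₗ[R] B) (h : ∀ d, f (a d) = g (b d)) :
    D →ₗ[R] FiberProd f g :=
  (a.prod b).codRestrict _ h

@[simp] theorem lift_val (a : D →ₗ[R] A) (b : D →ₗ[R] B) (h : ∀ d, f (a d) = g (b d)) (d : D) :
    (lift f g a b h d).1 = (a d, b d) := rfl

variable {f g}

theorem condition (z : FiberProd f g) : f z.1.1 = g z.1.2 := z.2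

end FiberProd

theorem IsSES.fiberProd {i : K →ₗ[R] A} {f : A →ₗ[R] C} (h : IsSES i f) (g : B →ₗ[R] C) :
    IsSES (FiberProd.lift f g i 0 (by simp [h.apply_apply_eq_zero])) (FiberProd.snd f g) := by
  refine isSES_of_exact ?_ ?_ ?_
  · intro a b hab
    exact h.1 (congrArg (fun z => z.1.1) hab)
  · intro b
    obtain ⟨a, ha⟩ := h.2.1 (g b)
    exact ⟨⟨(a, b), ha⟩, rfl⟩
  · intro z
    refine ⟨fun hz : z.1.2 = 0 => ?_, by rintro ⟨k, rfl⟩; simp⟩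
    obtain ⟨k, hk⟩ := h.exists_apply_eq (b := z.1.1) (by rw [z.condition, hz, map_zero])
    exact ⟨k, Subtype.ext (Prod.ext hk hz.symm)⟩

/-- The fibre coproduct `A ⊔_C B` of `f : C → A` and `g : C → B`. -/
abbrev FiberCoprod (f : C →ₗ[R] A) (g : C →ₗ[R] B) : Type u :=
  (A × B) ⧸ LinearMap.range (f.prod (-g))

namespace FiberCoprod

variable (f : C →ₗ[R] A) (g : C →ₗ[R] B)

/-- The canonical map from the left summand to a fibre coproduct. -/
def inl : A →ₗ[R] FiberCoprod f g :=
  Submodule.mkQ _ ∘ₗ LinearMap.inl R A B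

/-- The canonical map from the right summand to a fibre coproduct. -/
def inr : B →ₗ[R] FiberCoprod f g :=
  Submodule.mkQ _ ∘ₗ LinearMap.inr R A B

/-- The map out of a fibre coproduct given by the universal property. -/
def desc (a : A →ₗ[R] D) (b : B →ₗ[R] D) (h : ∀ c, a (f c) = b (g c)) :
    FiberCoprod f g →ₗ[R] D :=
  Submodule.liftQ _ (a.coprod b) (by rintro _ ⟨c, rfl⟩; simp [h c])

@[simp] theorem desc_inl (a : A →ₗ[R] D) (b : B →ₗ[R] D) (h : ∀ c, a (f c) = b (g c)) (x : A) :
    desc f g a b h (inl f g x) = a x := by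
  simp [desc, inl]

@[simp] theorem desc_inr (a : A →ₗ[R] D) (b : B →ₗ[R] D) (h : ∀ c, a (f c) = b (g c)) (y : B) :
    desc f g a b h (inr f g y) = b y := by
  simp [desc, inr]

theorem exists_eq_inl_add_inr (z : FiberCoprod f g) : ∃ x y, z = inl f g x + inr f g y := by
  obtain ⟨⟨x, y⟩, rfl⟩ := Submodule.Quotient.mk_surjective _ z
  exact ⟨x, y, by simp [inl, inr, ← Submodule.Quotient.mk_add]⟩

theorem inr_apply (c : C) : inr f g (g c) = inl f g (f c) := by
  have hc : (f c, 0) - (0, g c) ∈ LinearMap.range (f.prod (-g)) := ⟨c, by simp⟩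
  exact ((Submodule.Quotient.eq _).2 hc).symm

end FiberCoprod

theorem IsSES.fiberCoprod {g : C →ₗ[R] B} {π : B →ₗ[R] N} (h : IsSES g π) (f : C →ₗ[R] A) :
    IsSES (FiberCoprod.inl f g)
      (FiberCoprod.desc f g 0 π (by simp [h.apply_apply_eq_zero])) := by
  refine isSES_of_exact ?_ ?_ ?_
  · rw [injective_iff_map_eq_zero]
    intro a ha
    obtain ⟨c, hc⟩ := (Submodule.Quotient.mk_eq_zero _).1 ha
    obtain ⟨hfc, hgc⟩ : f c = a ∧ g c = 0 := by simpa using hc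
    rw [← hfc, h.1 (hgc.trans (map_zero g).symm), map_zero]
  · intro n
    obtain ⟨b, rfl⟩ := h.2.1 n
    exact ⟨FiberCoprod.inr f g b, by simp⟩
  · intro z
    refine ⟨fun hz => ?_, by rintro ⟨a, rfl⟩; simp⟩
    obtain ⟨a, b, rfl⟩ := FiberCoprod.exists_eq_inl_add_inr f g z
    obtain ⟨c, rfl⟩ := h.exists_apply_eq (b := b) (by simpa using hz)
    exact ⟨a + f c, by rw [FiberCoprod.inr_apply, map_add]⟩

/-! ### Resolving subcategories -/

/-- Membership of an unbundled module in a set of bundled modules. -/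
abbrev Mem (𝒳 : Set (ModuleCat.{u} R)) (M : Type u) [AddCommGroup M] [Module R M] : Prop :=
  ModuleCat.of R M ∈ 𝒳

section Resolving

variable {𝒳 : Set (ModuleCat.{u} R)}

namespace IsResolving

theorem mem_of_equiv (h : IsResolving R 𝒳) (e : M ≃ₗ[R] N) (hM : Mem 𝒳 M) : Mem 𝒳 N :=
  h.iso_closed _ _ ⟨e⟩ hM

theorem mem_of_projective (h : IsResolving R 𝒳) [Module.Finite R M] [Module.Projective R M] :
    Mem 𝒳 M :=
  h.proj_mem (ModuleCat.of R M) ‹_› ‹_›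

theorem mem_of_isSES (h : IsResolving R 𝒳) {f : A →ₗ[R] B} {g : B →ₗ[R] C} (hs : IsSES f g)
    (hA : Mem 𝒳 A) (hC : Mem 𝒳 C) : Mem 𝒳 B :=
  h.ext_closed (ModuleCat.of R A) (ModuleCat.of R B) (ModuleCat.of R C) f g hs hA hC

theorem mem_prod (h : IsResolving R 𝒳) (hA : Mem 𝒳 A) (hC : Mem 𝒳 C) : Mem 𝒳 (A × C) :=
  h.mem_of_isSES isSES_inl_snd hA hC

theorem mem_of_mem_prod (h : IsResolving R 𝒳) (hA : Mem 𝒳 (A × C)) : Mem 𝒳 A :=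
  h.summand_closed (ModuleCat.of R A) (ModuleCat.of R C) hA

theorem mem_of_retract (h : IsResolving R 𝒳) (i : M →ₗ[R] X) (r : X →ₗ[R] M)
    (hir : ∀ m, r (i m) = m) (hX : Mem 𝒳 X) : Mem 𝒳 M := by
  let p : X →ₗ[R] LinearMap.ker r :=
    (LinearMap.id - i ∘ₗ r).codRestrict _ fun x => by simp [hir]
  have hr (m : LinearMap.ker r) : r m = 0 := m.2
  let e : X ≃ₗ[R] M × LinearMap.ker r :=
    .ofLinearMap (r.prod p) (i.coprod (Submodule.subtype _))
      (by ext <;> simp [p, hir, hr]) (by ext; simp [p])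
  exact h.mem_of_mem_prod (h.mem_of_equiv e hX)

theorem mem_syzygy [IsNoetherianRing R] (h : IsResolving R 𝒳) {f : K →ₗ[R] P} {g : P →ₗ[R] M}
    (hs : IsSES f g) [Module.Finite R P] [Module.Projective R P] (hM : Mem 𝒳 M) : Mem 𝒳 K :=
  h.syzygy_closed (ModuleCat.of R K) (ModuleCat.of R P) (ModuleCat.of R M) f g hs
    (Module.Finite.of_injective f hs.1) ‹_› ‹_› hM

end IsResolving

/-- Multiplication by `s` on `M` factors through an object of `𝒳`. -/
def FactorsThrough (𝒳 : Set (ModuleCat.{u} R)) (s : R) (M : Type u) [AddCommGroup M]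
    [Module R M] : Prop :=
  ∃ X ∈ 𝒳, ∃ (f : M →ₗ[R] X) (g : X →ₗ[R] M), ∀ m, g (f m) = s • m

/-- The ideal of those `s` for which multiplication by `s` on `M` factors through an object of
`𝒳`; it contains `1` exactly when `M` belongs to `𝒳`. -/
def factorIdeal (h : IsResolving R 𝒳) (M : Type u) [AddCommGroup M] [Module R M] : Ideal R where
  carrier := {s | FactorsThrough 𝒳 s M}
  add_mem' := by
    rintro s t ⟨X, hX, f, g, hfg⟩ ⟨Y, hY, f', g', hfg'⟩
    refine ⟨ModuleCat.of R (X × Y), h.mem_prod hX hY, f.prod f', g.coprod g', ?_⟩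
    simp [hfg, hfg', add_smul]
  zero_mem' := ⟨ModuleCat.of R PUnit, h.mem_of_projective, 0, 0, by simp⟩
  smul_mem' := by
    rintro c s ⟨X, hX, f, g, hfg⟩
    exact ⟨X, hX, f, c • g, by simp [hfg, mul_smul]⟩

theorem FactorsThrough.mem (h : IsResolving R 𝒳) (hM : FactorsThrough 𝒳 1 M) : Mem 𝒳 M := by
  obtain ⟨X, hX, f, g, hfg⟩ := hM
  exact h.mem_of_retract f g (by simpa using hfg) hX

/-- Pull `B` back along `g'`, then push the result out along `f`. -/
theorem IsSES.exists_factor_mul {i : A →ₗ[R] B} {π : B →ₗ[R] C} (hs : IsSES i π) {a c : R}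
    {f : A →ₗ[R] X} {g : X →ₗ[R] A} (hfg : ∀ m, g (f m) = a • m)
    {f' : C →ₗ[R] Y} {g' : Y →ₗ[R] C} (hfg' : ∀ m, g' (f' m) = c • m) :
    ∃ (Q : ModuleCat.{u} R) (i' : X →ₗ[R] Q) (π' : Q →ₗ[R] Y) (_ : IsSES i' π')
      (F : B →ₗ[R] Q) (G : Q →ₗ[R] B), ∀ b, G (F b) = (a * c) • b := by
  let j := FiberProd.lift π g' i 0 (by simp [hs.apply_apply_eq_zero])
  have hj : IsSES j (FiberProd.snd π g') := hs.fiberProd g'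
  let F : B →ₗ[R] FiberProd π g' :=
    FiberProd.lift π g' (c • LinearMap.id) (f' ∘ₗ π) (by simp [hfg'])
  let G : FiberCoprod f j →ₗ[R] FiberProd π g' :=
    FiberCoprod.desc f j (j ∘ₗ g) (a • LinearMap.id) (by simp [hfg])
  refine ⟨ModuleCat.of R (FiberCoprod f j), _, _, hj.fiberCoprod f,
    FiberCoprod.inr f j ∘ₗ F, FiberProd.fst π g' ∘ₗ G, fun b => ?_⟩
  simp [G, F, mul_smul]

theorem FactorsThrough.of_isSES (h : IsResolving R 𝒳) {i : A →ₗ[R] B} {π : B →ₗ[R] C}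
    (hs : IsSES i π) {a c : R} (ha : FactorsThrough 𝒳 a A) (hc : FactorsThrough 𝒳 c C) :
    FactorsThrough 𝒳 (a * c) B := by
  obtain ⟨X, hX, f, g, hfg⟩ := ha
  obtain ⟨Y, hY, f', g', hfg'⟩ := hc
  obtain ⟨Q, i', π', hQ, F, G, hFG⟩ := hs.exists_factor_mul hfg hfg'
  exact ⟨Q, h.mem_of_isSES hQ hX hY, F, G, hFG⟩

theorem IsSES.exists_syzygy_factor {i : K →ₗ[R] P} {π : P →ₗ[R] M} (hs : IsSES i π)
    [Module.Projective R P] {j : L →ₗ[R] Q} {ρ : Q →ₗ[R] X} (ht : IsSES j ρ)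
    [Module.Projective R Q] {s : R} {f : M →ₗ[R] X} {g : X →ₗ[R] M}
    (hfg : ∀ m, g (f m) = s • m) :
    ∃ (F : K →ₗ[R] L × P) (G : L × P →ₗ[R] K), ∀ k, G (F k) = s • k := by
  obtain ⟨F, hF⟩ := Module.projective_lifting_property ρ (f ∘ₗ π) ht.2.1
  obtain ⟨G, hG⟩ := Module.projective_lifting_property π (g ∘ₗ ρ) hs.2.1
  replace hF (x) : ρ (F x) = f (π x) := LinearMap.congr_fun hF x
  replace hG (x) : π (G x) = g (ρ x) := LinearMap.congr_fun hG x
  obtain ⟨F', hF'⟩ := ht.exists_lift (F ∘ₗ i) (by simp [hF, hs.apply_apply_eq_zero])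
  obtain ⟨G', hG'⟩ := hs.exists_lift (G ∘ₗ j) (by simp [hG, ht.apply_apply_eq_zero])
  obtain ⟨H, hH⟩ := hs.exists_lift (s • LinearMap.id - G ∘ₗ F) (by simp [hG, hF, hfg])
  exact ⟨F'.prod i, G'.coprod H, fun k => hs.1 (by simp [hG', hF', hH])⟩

theorem FactorsThrough.syzygy [IsNoetherianRing R] (h : IsResolving R 𝒳) {i : K →ₗ[R] P}
    {π : P →ₗ[R] M} (hs : IsSES i π) [Module.Projective R P] [Module.Finite R P] {s : R}
    (hM : FactorsThrough 𝒳 s M) : FactorsThrough 𝒳 s K := by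
  obtain ⟨X, hX, f, g, hfg⟩ := hM
  have : Module.Finite R X := h.fg _ hX
  obtain ⟨n, ρ, hρ⟩ := exists_isSES_free_cover (R := R) X
  obtain ⟨F, G, hFG⟩ := hs.exists_syzygy_factor hρ hfg
  exact ⟨ModuleCat.of R (_ × P), h.mem_prod (h.mem_syzygy hρ hX) h.mem_of_projective, F, G, hFG⟩

/-- The fibre product of `π` with multiplication by `x` on its target. -/
abbrev MulFiber (π : P →ₗ[R] M) (x : R) : Type u :=
  FiberProd π (x • LinearMap.id : M →ₗ[R] M)

-- If `x • id = g ∘ f` with `f : M → X`, then `0 → MulFiber π x → M × FiberProd π g → X → 0`.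
theorem IsResolving.mem_of_mem_mulFiber (h : IsResolving R 𝒳) {π : P →ₗ[R] M}
    (hπ : Function.Surjective π) {x : R} (hx : FactorsThrough 𝒳 x M)
    (hB : Mem 𝒳 (MulFiber π x)) : Mem 𝒳 M := by
  obtain ⟨X, hX, f, g, hfg⟩ := hx
  let a : MulFiber π x →ₗ[R] M × FiberProd π g := (FiberProd.snd _ _).prod
    (FiberProd.lift π g (FiberProd.fst _ _) (f ∘ₗ FiberProd.snd _ _)
      fun z => by simpa [hfg] using z.condition)
  let b : M × FiberProd π g →ₗ[R] X := f.coprod (-FiberProd.snd π g)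
  have hab : IsSES a b := by
    refine isSES_of_exact ?_ ?_ ?_
    · intro y z hyz
      exact Subtype.ext (Prod.ext (congrArg (fun t => t.2.1.1) hyz) (congrArg Prod.fst hyz))
    · intro y
      obtain ⟨p, hp⟩ := hπ (g y)
      exact ⟨(0, -⟨(p, y), hp⟩), by simp [b]⟩
    · rintro ⟨m, z⟩
      refine ⟨fun hz => ?_, fun ⟨y, hy⟩ => by simp [← hy, a, b]⟩
      have hz : f m = z.1.2 := by simpa [b, ← sub_eq_add_neg, sub_eq_zero] using hz
      have hzm : π z.1.1 = x • m := by rw [z.condition, ← hz, hfg]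
      exact ⟨⟨(z.1.1, m), hzm⟩, Prod.ext rfl (Subtype.ext (Prod.ext rfl hz))⟩
  exact h.mem_of_mem_prod (h.mem_of_isSES hab hB hX)

end Resolving

/-! ### Ext modules and projective dimension -/

/-- `Extʲ_R(A, Y)` for unbundled modules. -/
abbrev ExtMod (R : Type u) [CommRing R] (A Y : Type u) [AddCommGroup A] [Module R A]
    [AddCommGroup Y] [Module R Y] (j : ℕ) : Type u :=
  Ext (ModuleCat.of R A) (ModuleCat.of R Y) j

/-- The vanishing of `Extʲ_R(A, Y)`. -/
abbrev ExtVanish (R : Type u) [CommRing R] (A Y : Type u) [AddCommGroup A] [Module R A]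
    [AddCommGroup Y] [Module R Y] (j : ℕ) : Prop :=
  Subsingleton (ExtMod R A Y j)

/-- The identification of `Hom_R(A, Y)` with `Ext⁰_R(A, Y)`. -/
noncomputable def homToExt : (A →ₗ[R] Y) ≃ₗ[R] ExtMod R A Y 0 :=
  (ModuleCat.homLinearEquiv (S := R) (M := ModuleCat.of R A) (N := ModuleCat.of R Y)).symm ≪≫ₗ
    Ext.linearEquiv₀.symm

/-- Contravariant functoriality of `Extʲ_R(-, Y)`, as a bilinear map. -/
noncomputable def precomp : (A →ₗ[R] B) →ₗ[R] ExtMod R B Y j →ₗ[R] ExtMod R A Y j :=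
  Ext.bilinearCompOfLinear R _ _ _ 0 j j (zero_add j) ∘ₗ homToExt.toLinearMap

/-- Covariant functoriality of `Extʲ_R(Z, -)`, as a bilinear map. -/
noncomputable def postcomp : (A →ₗ[R] B) →ₗ[R] ExtMod R Z A j →ₗ[R] ExtMod R Z B j :=
  (Ext.bilinearCompOfLinear R _ _ _ j 0 j (add_zero j)).flip ∘ₗ homToExt.toLinearMap

theorem precomp_apply (f : A →ₗ[R] B) (x : ExtMod R B Y j) :
    precomp f x = (Ext.mk₀ (ModuleCat.ofHom f)).comp x (zero_add j) := rfl

theorem postcomp_apply (f : A →ₗ[R] B) (x : ExtMod R Z A j) :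
    postcomp f x = x.comp (Ext.mk₀ (ModuleCat.ofHom f)) (add_zero j) := rfl

theorem precomp_comp (f : A →ₗ[R] B) (g : B →ₗ[R] C) (x : ExtMod R C Y j) :
    precomp (g ∘ₗ f) x = precomp f (precomp g x) := by
  simp [precomp_apply, ModuleCat.ofHom_comp]

theorem precomp_id (x : ExtMod R A Y j) : precomp (LinearMap.id : A →ₗ[R] A) x = x := by
  simp [precomp_apply]

theorem precomp_smul_id (r : R) (x : ExtMod R A Y j) :
    precomp (r • LinearMap.id : A →ₗ[R] A) x = r • x := by
  rw [map_smul, LinearMap.smul_apply, precomp_id]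

theorem postcomp_comp (f : A →ₗ[R] B) (g : B →ₗ[R] C) (x : ExtMod R Z A j) :
    postcomp (g ∘ₗ f) x = postcomp g (postcomp f x) := by
  simp only [postcomp_apply, ModuleCat.ofHom_comp]
  rw [Ext.comp_assoc_of_third_deg_zero, Ext.mk₀_comp_mk₀]

theorem postcomp_id (x : ExtMod R Z A j) : postcomp (LinearMap.id : A →ₗ[R] A) x = x := by
  simp [postcomp_apply]

theorem precomp_homToExt (f : A →ₗ[R] B) (g : B →ₗ[R] Y) :
    precomp f (homToExt g) = homToExt (g ∘ₗ f) :=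
  Ext.mk₀_comp_mk₀ _ _

theorem postcomp_homToExt (f : Z →ₗ[R] A) (g : A →ₗ[R] B) :
    postcomp g (homToExt f) = homToExt (g ∘ₗ f) :=
  Ext.mk₀_comp_mk₀ _ _

theorem extVanish_succ_of_projective [Module.Projective R P] : ExtVanish R P Y (j + 1) :=
  have : Projective (ModuleCat.of R P) :=
    (IsProjective.iff_projective (R := R) P).1 inferInstance
  ⟨fun x y => (Ext.eq_zero_of_projective x).trans (Ext.eq_zero_of_projective y).symm⟩

namespace IsSES

/-- The short complex underlying a short exact sequence. -/
abbrev shortComplex {f : A →ₗ[R] B} {g : B →ₗ[R] C} (h : IsSES f g) :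
    ShortComplex (ModuleCat.{u} R) :=
  .mk (ModuleCat.ofHom f) (ModuleCat.ofHom g) (by ext a; exact h.apply_apply_eq_zero a)

theorem shortExact {f : A →ₗ[R] B} {g : B →ₗ[R] C} (h : IsSES f g) :
    h.shortComplex.ShortExact :=
  have : Mono h.shortComplex.f := (ModuleCat.mono_iff_injective _).2 h.1
  have : Epi h.shortComplex.g := (ModuleCat.epi_iff_surjective _).2 h.2.1
  .mk ((ShortComplex.moduleCat_exact_iff _).2 fun _ hb => h.exists_apply_eq hb)

section

variable {f : A →ₗ[R] B} {g : B →ₗ[R] C}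

/-- The connecting map `Extʲ(A, Y) → Extʲ⁺¹(C, Y)` of `0 → A → B → C → 0`. -/
noncomputable def connecting (h : IsSES f g) : ExtMod R A Y j →ₗ[R] ExtMod R C Y (j + 1) :=
  h.shortExact.extClass.precompOfLinear R _ (add_comm 1 j)

/-- The connecting map `Extʲ(Z, C) → Extʲ⁺¹(Z, A)` of `0 → A → B → C → 0`. -/
noncomputable def coconnecting (h : IsSES f g) :
    ExtMod R Z C j →ₗ[R] ExtMod R Z A (j + 1) :=
  h.shortExact.extClass.postcompOfLinear R _ rfl

theorem connecting_precomp (h : IsSES f g) (x : ExtMod R B Y j) :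
    h.connecting (precomp f x) = 0 :=
  h.shortExact.extClass_comp_assoc x (h := add_comm 1 j)

theorem exists_precomp_left_eq (h : IsSES f g) {x : ExtMod R A Y j} (hx : h.connecting x = 0) :
    ∃ y : ExtMod R B Y j, precomp f y = x :=
  Ext.contravariant_sequence_exact₁ h.shortExact _ x (add_comm 1 j) hx

theorem exists_precomp_right_eq (h : IsSES f g) {x : ExtMod R B Y j} (hx : precomp f x = 0) :
    ∃ y : ExtMod R C Y j, precomp g y = x :=
  Ext.contravariant_sequence_exact₂ h.shortExact _ x hx

theorem exists_connecting_eq (h : IsSES f g) {x : ExtMod R C Y (j + 1)}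
    (hx : precomp g x = 0) : ∃ y : ExtMod R A Y j, h.connecting y = x :=
  Ext.contravariant_sequence_exact₃ h.shortExact _ x hx (add_comm 1 j)

theorem exists_coconnecting_eq (h : IsSES f g) {x : ExtMod R Z A (j + 1)}
    (hx : postcomp f x = 0) : ∃ y : ExtMod R Z C j, h.coconnecting y = x :=
  Ext.covariant_sequence_exact₁ _ h.shortExact x hx rfl

theorem exists_postcomp_right_eq (h : IsSES f g) {x : ExtMod R Z C j}
    (hx : h.coconnecting x = 0) : ∃ y : ExtMod R Z B j, postcomp g y = x :=
  Ext.covariant_sequence_exact₃ _ h.shortExact x rfl hx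

theorem eq_zero_of_postcomp_left_eq_zero (h : IsSES f g) {x : ExtMod R Z A 0}
    (hx : postcomp f x = 0) : x = 0 := by
  obtain ⟨φ, rfl⟩ := homToExt.surjective x
  rw [postcomp_homToExt, LinearEquiv.map_eq_zero_iff] at hx
  rw [LinearEquiv.map_eq_zero_iff]
  exact LinearMap.ext fun z => h.1 (by simpa using LinearMap.congr_fun hx z)

theorem connecting_natural {A' B' C' : Type u} [AddCommGroup A'] [Module R A']
    [AddCommGroup B'] [Module R B'] [AddCommGroup C'] [Module R C'] {f' : A' →ₗ[R] B'}
    {g' : B' →ₗ[R] C'} (h : IsSES f g) (h' : IsSES f' g') (a : A →ₗ[R] A') (b : B →ₗ[R] B')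
    (c : C →ₗ[R] C') (hab : ∀ x, b (f x) = f' (a x)) (hbc : ∀ x, c (g x) = g' (b x))
    (y : ExtMod R A' Y j) : h.connecting (precomp a y) = precomp c (h'.connecting y) := by
  have hclass : h.shortExact.extClass.comp (Ext.mk₀ (ModuleCat.ofHom a)) (add_zero 1) =
      (Ext.mk₀ (ModuleCat.ofHom c)).comp h'.shortExact.extClass (zero_add 1) :=
    h.shortExact.extClass_naturality h'.shortExact
      (ShortComplex.homMk (S₁ := h.shortComplex) (S₂ := h'.shortComplex)
        (ModuleCat.ofHom a) (ModuleCat.ofHom b) (ModuleCat.ofHom c)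
        (by ext x; exact (hab x).symm) (by ext x; exact (hbc x).symm))
  change h.shortExact.extClass.comp ((Ext.mk₀ (ModuleCat.ofHom a)).comp y (zero_add j))
      (add_comm 1 j) =
    (Ext.mk₀ (ModuleCat.ofHom c)).comp (h'.shortExact.extClass.comp y (add_comm 1 j))
      (zero_add (j + 1))
  rw [← Ext.comp_assoc_of_second_deg_zero, hclass, Ext.comp_assoc]
  omega

theorem exists_connecting_natural {A' B' C' : Type u} [AddCommGroup A'] [Module R A']
    [AddCommGroup B'] [Module R B'] [AddCommGroup C'] [Module R C'] {f' : A' →ₗ[R] B'}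
    {g' : B' →ₗ[R] C'} (h : IsSES f g) (h' : IsSES f' g') (a : A →ₗ[R] A') (b : B →ₗ[R] B')
    (hab : ∀ x, b (f x) = f' (a x)) :
    ∃ c : C →ₗ[R] C', (∀ x, c (g x) = g' (b x)) ∧ ∀ {Y : Type u} [AddCommGroup Y] [Module R Y]
      {j : ℕ} (y : ExtMod R A' Y j), h.connecting (precomp a y) = precomp c (h'.connecting y) := by
  obtain ⟨c, hc⟩ := h.exists_desc (g' ∘ₗ b) (by simp [hab, h'.apply_apply_eq_zero])
  exact ⟨c, hc, h.connecting_natural h' a b c hab hc⟩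

theorem connecting_fiberProd (h : IsSES f g) (k : D →ₗ[R] C) (x : ExtMod R A Y j) :
    (h.fiberProd k).connecting x = precomp k (h.connecting x) := by
  simpa only [precomp_id] using (h.fiberProd k).connecting_natural h LinearMap.id
    (FiberProd.fst g k) k (fun _ => rfl) (fun z => z.condition.symm) x

end

end IsSES

/-- `pd_R A < n`. -/
abbrev PdLT (R : Type u) [CommRing R] (n : ℕ) (A : Type u) [AddCommGroup A] [Module R A] : Prop :=
  HasProjectiveDimensionLT (ModuleCat.of R A) n

namespace PdLT

theorem extVanish {n : ℕ} (h : PdLT R n A) (hj : n ≤ j) : ExtVanish R A Y j :=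
  have := h
  ⟨fun x y => (Ext.eq_zero_of_hasProjectiveDimensionLT x n hj).trans
    (Ext.eq_zero_of_hasProjectiveDimensionLT y n hj).symm⟩

theorem mono {n m : ℕ} (h : PdLT R n A) (hm : n ≤ m) : PdLT R m A :=
  have := h
  hasProjectiveDimensionLT_of_ge _ n m hm

theorem one_iff_projective : PdLT R 1 A ↔ Module.Projective R A := by
  rw [PdLT, ← projective_iff_hasProjectiveDimensionLT_one, ← IsProjective.iff_projective]

theorem of_projective [Module.Projective R A] (n : ℕ) : PdLT R (n + 1) A :=
  (one_iff_projective.2 inferInstance).mono (by omega)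

end PdLT

namespace IsSES

variable {f : A →ₗ[R] B} {g : B →ₗ[R] C} {n : ℕ}

theorem pdLT_right (h : IsSES f g) (hA : PdLT R n A) (hB : PdLT R (n + 1) B) :
    PdLT R (n + 1) C :=
  h.shortExact.hasProjectiveDimensionLT_X₃ n hA hB

theorem pdLT_middle (h : IsSES f g) (hA : PdLT R n A) (hC : PdLT R n C) : PdLT R n B :=
  h.shortExact.hasProjectiveDimensionLT_X₂ n hA hC

theorem pdLT_left (h : IsSES f g) (hB : PdLT R n B) (hC : PdLT R (n + 1) C) : PdLT R n A :=
  h.shortExact.hasProjectiveDimensionLT_X₁ n hB hC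

end IsSES

theorem ExtVanish.eq_zero (h : ExtVanish R A Y j) (x : ExtMod R A Y j) : x = 0 :=
  h.allEq x 0

theorem eq_zero_of_forall_postcomp_eq_zero [Module.Finite R P] [Module.Projective R P]
    {x : ExtMod R A P j} (hx : ∀ φ : P →ₗ[R] R, postcomp φ x = 0) : x = 0 := by
  obtain ⟨n, g, hg⟩ := Module.Finite.exists_fin' R P
  obtain ⟨s, hs⟩ := Module.projective_lifting_property g LinearMap.id hg
  have hid : (LinearMap.id : P →ₗ[R] P) =
      ∑ i, (g ∘ₗ LinearMap.single R (fun _ => R) i) ∘ₗ (LinearMap.proj i ∘ₗ s) := by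
    ext p
    simpa [← map_sum, Finset.univ_sum_single] using (LinearMap.congr_fun hs p).symm
  rw [← postcomp_id x, hid, map_sum, LinearMap.sum_apply]
  exact Finset.sum_eq_zero fun i _ => by rw [postcomp_comp, hx, map_zero]

theorem ExtVanish.of_projective [Module.Finite R P] [Module.Projective R P]
    (h : ExtVanish R A R j) : ExtVanish R A P j :=
  subsingleton_of_forall_eq 0 fun _ =>
    eq_zero_of_forall_postcomp_eq_zero fun _ => h.eq_zero _

namespace IsSES

variable {f : A →ₗ[R] B} {g : B →ₗ[R] C}

theorem connecting_surjective_of_projective [Module.Projective R B] (h : IsSES f g) :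
    Function.Surjective (h.connecting : ExtMod R A Y j →ₗ[R] ExtMod R C Y (j + 1)) :=
  fun _ => h.exists_connecting_eq (extVanish_succ_of_projective.eq_zero _)

theorem connecting_injective_of_projective [Module.Projective R B] (h : IsSES f g) :
    Function.Injective (h.connecting : ExtMod R A Y (j + 1) →ₗ[R] ExtMod R C Y (j + 2)) := by
  rw [injective_iff_map_eq_zero]
  intro x hx
  obtain ⟨y, rfl⟩ := h.exists_precomp_left_eq hx
  rw [extVanish_succ_of_projective.eq_zero y, map_zero]

theorem extVanish_left [Module.Projective R B] (h : IsSES f g)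
    (hC : ExtVanish R C Y (j + 2)) : ExtVanish R A Y (j + 1) :=
  have := hC
  h.connecting_injective_of_projective.subsingleton

theorem exists_extension (h : IsSES f g) (hC : ExtVanish R C Y 1) (k : A →ₗ[R] Y) :
    ∃ r : B →ₗ[R] Y, ∀ a, r (f a) = k a := by
  obtain ⟨y, hy⟩ := h.exists_precomp_left_eq (x := homToExt k) (hC.eq_zero _)
  obtain ⟨r, rfl⟩ := homToExt.surjective y
  rw [precomp_homToExt] at hy
  exact ⟨r, LinearMap.congr_fun (homToExt.injective hy)⟩

theorem projective_right [Module.Projective R B] (h : IsSES f g) (hC : ExtVanish R C A 1) :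
    Module.Projective R C := by
  obtain ⟨r, hr⟩ := h.exists_extension hC LinearMap.id
  obtain ⟨l, hl⟩ := h.exists_desc (LinearMap.id - f ∘ₗ r) (by simp [hr])
  refine .of_split l g (LinearMap.ext fun c => ?_)
  obtain ⟨b, rfl⟩ := h.2.1 c
  simp [hl, h.apply_apply_eq_zero]

end IsSES

theorem projective_of_extVanish [IsNoetherianRing R] (m : ℕ) : ∀ (A : Type u) [AddCommGroup A]
    [Module R A] [Module.Finite R A], PdLT R (m + 1) A → (∀ j, ExtVanish R A R (j + 1)) →
    Module.Projective R A := by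
  induction m with
  | zero => exact fun A _ _ _ hA _ => PdLT.one_iff_projective.1 hA
  | succ m ih =>
    intro A _ _ _ hA hv
    obtain ⟨n, g, hg⟩ := exists_isSES_free_cover (R := R) A
    have : Module.Projective R (LinearMap.ker g) :=
      ih _ (hg.pdLT_left (.of_projective m) hA) fun j => hg.extVanish_left (hv (j + 1))
    exact hg.projective_right (hv 0).of_projective

theorem pdLT_of_extVanish [IsNoetherianRing R] (n : ℕ) : ∀ (A : Type u) [AddCommGroup A]
    [Module R A] [Module.Finite R A] (m : ℕ), PdLT R m A →
    (∀ j, n < j → ExtVanish R A R j) → PdLT R (n + 1) A := by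
  induction n with
  | zero =>
    intro A _ _ _ m hA hv
    exact PdLT.one_iff_projective.2
      (projective_of_extVanish m A (hA.mono m.le_succ) fun j => hv _ j.succ_pos)
  | succ n ih =>
    intro A _ _ _ m hA hv
    obtain ⟨k, g, hg⟩ := exists_isSES_free_cover (R := R) A
    refine hg.pdLT_right (ih _ (m + 1) (hg.pdLT_left (.of_projective m) (hA.mono (by omega)))
      fun j hj => ?_) (.of_projective _)
    obtain ⟨j, rfl⟩ := Nat.exists_eq_succ_of_ne_zero (Nat.ne_zero_of_lt hj)
    exact hg.extVanish_left (hv _ (by omega))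

theorem pdLT_of_pdLE (n : ℕ) : ∀ A : ModuleCat.{u} R, pdLE R n A → PdLT R (n + 1) A := by
  induction n with
  | zero => exact fun A hA => PdLT.one_iff_projective.2 hA
  | succ n ih =>
    rintro A ⟨K, P, f, g, _, _, hs, hK⟩
    exact hs.pdLT_right (ih K hK) (.of_projective _)

theorem pdLE_of_pdLT [IsNoetherianRing R] (n : ℕ) : ∀ A : ModuleCat.{u} R,
    Module.Finite R A → PdLT R (n + 1) A → pdLE R n A := by
  induction n with
  | zero => exact fun A _ hA => PdLT.one_iff_projective.1 hA
  | succ n ih =>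
    intro A _ hA
    obtain ⟨k, g, hg⟩ := exists_isSES_free_cover (R := R) A
    exact ⟨ModuleCat.of R (LinearMap.ker g), ModuleCat.of R (Fin k → R),
      (LinearMap.ker g).subtype, g, inferInstanceAs (Module.Finite R (Fin k → R)),
      inferInstanceAs (Module.Projective R (Fin k → R)), hg,
      ih _ inferInstance (hg.pdLT_left (.of_projective n) hA)⟩

/-- `A` has finite projective dimension and `N` is the largest degree in which `Ext(A, R)` does
not vanish; over a local ring `N` is then the projective dimension of `A`. -/
structure IsTopExtDegree (R : Type u) [CommRing R] (N : ℕ) (A : Type u) [AddCommGroup A]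
    [Module R A] : Prop where
  exists_pdLT : ∃ m, PdLT R m A
  nontrivial : Nontrivial (ExtMod R A R N)
  extVanish : ∀ j, N < j → ExtVanish R A R j

theorem PdLT.exists_isTopExtDegree {m n : ℕ} (h : PdLT R m A)
    (hn : Nontrivial (ExtMod R A R n)) : ∃ N, n ≤ N ∧ IsTopExtDegree R N A := by
  classical
  let p (N : ℕ) : Prop := n ≤ N ∧ Nontrivial (ExtMod R A R N)
  have hlt (N : ℕ) (hN : p N) : N ≤ m :=
    le_of_not_ge fun hmN => not_nontrivial_iff_subsingleton.2 (h.extVanish hmN) hN.2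
  obtain ⟨hle, hnt⟩ := Nat.findGreatest_spec (P := p) (hlt n ⟨le_rfl, hn⟩) ⟨le_rfl, hn⟩
  refine ⟨Nat.findGreatest p m, hle, ⟨m, h⟩, hnt, fun j hj => ?_⟩
  refine not_nontrivial_iff_subsingleton.1 fun hj' => hj.not_ge ?_
  exact Nat.le_findGreatest (hlt j ⟨by omega, hj'⟩) ⟨by omega, hj'⟩

namespace IsTopExtDegree

theorem pdLT [IsNoetherianRing R] {n : ℕ} [Module.Finite R A] (h : IsTopExtDegree R n A) :
    PdLT R (n + 1) A :=
  have ⟨m, hm⟩ := h.exists_pdLT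
  pdLT_of_extVanish n A m hm h.extVanish

theorem syzygy [Module.Projective R B] {f : A →ₗ[R] B} {g : B →ₗ[R] C} (hs : IsSES f g) {n : ℕ}
    (hC : IsTopExtDegree R (n + 2) C) : IsTopExtDegree R (n + 1) A := by
  obtain ⟨m, hm⟩ := hC.exists_pdLT
  have := hC.nontrivial
  refine ⟨⟨m + 1, hs.pdLT_left (.of_projective m) (hm.mono (by omega))⟩,
    hs.connecting_surjective_of_projective.nontrivial, fun j hj => ?_⟩
  obtain ⟨j, rfl⟩ := Nat.exists_eq_succ_of_ne_zero (Nat.ne_zero_of_lt hj)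
  exact hs.extVanish_left (hC.extVanish _ (by omega))

theorem exists_syzygy [IsNoetherianRing R] {n : ℕ} : ∀ (A : Type u) [AddCommGroup A] [Module R A]
    [Module.Finite R A], IsTopExtDegree R n A → ∀ i, 1 ≤ i → i ≤ n →
    ∃ Z : ModuleCat.{u} R, Module.Finite R Z ∧ IsTopExtDegree R i Z := by
  induction n with
  | zero => intros; omega
  | succ n ih =>
    intro A _ _ _ h i hi hin
    rcases Nat.eq_or_lt_of_le hin with rfl | hlt
    · exact ⟨ModuleCat.of R A, ‹_›, h⟩
    · obtain ⟨n, rfl⟩ : ∃ k, n = k + 1 := ⟨n - 1, by omega⟩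
      obtain ⟨k, g, hg⟩ := exists_isSES_free_cover (R := R) A
      exact ih _ (h.syzygy hg) i hi (by omega)

end IsTopExtDegree

theorem pdim_le_of_pdLE {n : ℕ} {A : ModuleCat.{u} R} (h : pdLE R n A) :
    pdim R A ≤ ((n : ℕ∞) : WithBot ℕ∞) :=
  sInf_le (Or.inr ⟨n, rfl, h⟩)

theorem subsingleton_or_pdim_eq {A : ModuleCat.{u} R} (h : pdim R A ≠ ⊤) :
    Subsingleton A ∨ ∃ n : ℕ, pdim R A = (n : ℕ∞) ∧ pdLE R n A := by
  have hne : {x : WithBot ℕ∞ | (x = ⊥ ∧ Subsingleton A) ∨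
      ∃ n : ℕ, x = (n : ℕ∞) ∧ pdLE R n A}.Nonempty := by
    by_contra hempty
    exact h (by rw [pdim, Set.not_nonempty_iff_eq_empty.1 hempty, sInf_empty])
  exact (csInf_mem hne).imp_left And.right

theorem exists_pdLT_of_pdim_ne_top {A : ModuleCat.{u} R} (h : pdim R A ≠ ⊤) :
    ∃ m, PdLT R m A := by
  rcases subsingleton_or_pdim_eq h with _ | ⟨n, -, hn⟩
  · exact ⟨1, .of_projective 0⟩
  · exact ⟨n + 1, pdLT_of_pdLE n A hn⟩

theorem exists_isTopExtDegree_of_not_free [IsNoetherianRing R] [IsLocalRing R]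
    [Module.Finite R M] {m : ℕ} (hm : PdLT R m M) (hfree : ¬ Module.Free R M) :
    ∃ n, 1 ≤ n ∧ IsTopExtDegree R n M := by
  obtain ⟨j, hj⟩ : ∃ j, Nontrivial (ExtMod R M R (j + 1)) := by
    by_contra! hv
    have := projective_of_extVanish m M (hm.mono m.le_succ) hv
    exact hfree Module.free_of_flat_of_isLocalRing
  obtain ⟨n, hn, htop⟩ := hm.exists_isTopExtDegree hj
  exact ⟨n, by omega, htop⟩

theorem IsTopExtDegree.exists_of_pdim_le [IsNoetherianRing R] {n : ℕ} (hn : 1 ≤ n)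
    {M X : ModuleCat.{u} R} [Module.Finite R X] (h : IsTopExtDegree R n M)
    (hle : pdim R M ≤ pdim R X) (hX : pdim R X ≠ ⊤) :
    ∃ N, n ≤ N ∧ IsTopExtDegree R N X := by
  obtain ⟨m, hm⟩ := exists_pdLT_of_pdim_ne_top hX
  suffices ∃ j, n ≤ j ∧ Nontrivial (ExtMod R X R j) by
    obtain ⟨j, hj, hnt⟩ := this
    obtain ⟨N, hN, htop⟩ := hm.exists_isTopExtDegree hnt
    exact ⟨N, hj.trans hN, htop⟩
  by_contra! hv
  obtain ⟨n, rfl⟩ := Nat.exists_eq_succ_of_ne_zero (Nat.ne_zero_of_lt hn)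
  have hXn : pdLE R n X := pdLE_of_pdLT n X ‹_› (pdLT_of_extVanish n X m hm hv)
  have hMn : PdLT R (n + 1) M := by
    rcases subsingleton_or_pdim_eq (ne_top_of_le_ne_top hX hle) with _ | ⟨a, ha, hMa⟩
    · exact .of_projective n
    · have han : a ≤ n := by exact_mod_cast ha ▸ hle.trans (pdim_le_of_pdLE hXn)
      exact (pdLT_of_pdLE a M hMa).mono (by omega)
  exact not_nontrivial_iff_subsingleton.2 (hMn.extVanish le_rfl) h.nontrivial

/-! ### The depth of a local ring bounds projective dimensions -/

theorem smul_residueField_eq_zero [IsLocalRing R] {r : R} (hr : r ∈ maximalIdeal R)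
    (a : ResidueField R) : r • a = 0 := by
  have hr' : algebraMap R (ResidueField R) r = 0 := (residue_eq_zero_iff r).2 hr
  rw [Algebra.smul_def, hr', zero_mul]

theorem smul_ext_residueField_eq_zero [IsLocalRing R] {r : R} (hr : r ∈ maximalIdeal R)
    (x : ExtMod R (ResidueField R) Y j) : r • x = 0 := by
  have hr' : r • (LinearMap.id : ResidueField R →ₗ[R] ResidueField R) = 0 :=
    LinearMap.ext (smul_residueField_eq_zero hr)
  rw [← precomp_smul_id, hr', map_zero, LinearMap.zero_apply]

theorem exists_apply_eq_one_of_tmul_ne_zero [IsLocalRing R] [Module.Free R K] [Module.Finite R K]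
    {u : K} (hu : (1 : ResidueField R) ⊗ₜ[R] u ≠ 0) : ∃ ρ : K →ₗ[R] R, ρ u = 1 := by
  let b := Module.Free.chooseBasis R K
  obtain ⟨i, hi⟩ : ∃ i, b.repr u i ∉ maximalIdeal R := by
    by_contra! hb
    refine hu ?_
    rw [← b.sum_repr u, TensorProduct.tmul_sum]
    refine Finset.sum_eq_zero fun i _ => ?_
    rw [← TensorProduct.smul_tmul, smul_residueField_eq_zero (hb i), TensorProduct.zero_tmul]
  obtain ⟨v, hv⟩ := (notMem_maximalIdeal.1 hi).exists_left_inv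
  exact ⟨v • b.coord i, hv⟩

theorem apply_mem_maximalIdeal_of_tmul_eq_zero [IsLocalRing R] {v : L}
    (hv : (1 : ResidueField R) ⊗ₜ[R] v = 0) (φ : L →ₗ[R] R) : φ v ∈ maximalIdeal R := by
  have h := congrArg (TensorProduct.rid R (ResidueField R) ∘ φ.lTensor (ResidueField R)) hv
  simp only [Function.comp_apply, LinearMap.lTensor_tmul, TensorProduct.rid_tmul, map_zero,
    Algebra.smul_def, mul_one] at h
  exact (residue_eq_zero_iff _).1 h

-- Otherwise `k ⊗ K → k ⊗ P` would be injective, and the inclusion `K → P` would split.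
theorem IsTopExtDegree.exists_mem_maximalIdeal [IsNoetherianRing R] [IsLocalRing R]
    [Module.Finite R P] [Module.Free R P] [Module.Finite R M] (hM : IsTopExtDegree R 1 M)
    {f : K →ₗ[R] P} {g : P →ₗ[R] M} (h : IsSES f g) :
    ∃ (u : K) (ρ : K →ₗ[R] R), ρ u = 1 ∧ ∀ φ : P →ₗ[R] R, φ (f u) ∈ maximalIdeal R := by
  have : Module.Finite R K := .of_injective f h.1
  have : Module.Projective R K :=
    PdLT.one_iff_projective.1 (h.pdLT_left (.of_projective 0) hM.pdLT)
  have : Module.Free R K := Module.free_of_flat_of_isLocalRing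
  have hns : ¬ Function.Injective (f.lTensor (ResidueField R)) := by
    intro hinj
    obtain ⟨l, hl⟩ := (split_injective_iff_lTensor_residueField_injective f).2 hinj
    have := hM.nontrivial
    obtain ⟨x, hx⟩ := exists_ne (0 : ExtMod R M R 1)
    obtain ⟨y, rfl⟩ := h.connecting_surjective_of_projective x
    rw [← precomp_id y, ← hl, precomp_comp, h.connecting_precomp] at hx
    exact hx rfl
  rw [injective_iff_map_eq_zero] at hns
  push Not at hns
  obtain ⟨z, hz, hz0⟩ := hns
  obtain ⟨u, rfl⟩ := TensorProduct.mk_surjective R K (ResidueField R) residue_surjective z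
  obtain ⟨ρ, hρ⟩ := exists_apply_eq_one_of_tmul_ne_zero hz0
  exact ⟨u, ρ, hρ, apply_mem_maximalIdeal_of_tmul_eq_zero (by simpa using hz)⟩

theorem IsTopExtDegree.exists_ext_residueField_ker [IsNoetherianRing R] [IsLocalRing R] {d : ℕ}
    {y : ExtMod R (ResidueField R) R d} (hy : y ≠ 0)
    (hd : ∀ j < d, ExtVanish R (ResidueField R) R j) (i : ℕ) :
    ∀ (Z : Type u) [AddCommGroup Z] [Module R Z] [Module.Finite R Z],
    IsTopExtDegree R (i + 1) Z → ∀ (j n : ℕ) (g : (Fin n → R) →ₗ[R] Z),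
    IsSES (LinearMap.ker g).subtype g → j + i = d →
    ∃ x : ExtMod R (ResidueField R) (LinearMap.ker g) j,
      x ≠ 0 ∧ postcomp (LinearMap.ker g).subtype x = 0 := by
  induction i with
  | zero =>
    rintro Z _ _ _ hZ j n g hg rfl
    obtain ⟨u, ρ, hρ, hu⟩ := hZ.exists_mem_maximalIdeal hg
    refine ⟨postcomp (LinearMap.toSpanSingleton R _ u) y, fun h0 => hy ?_,
      eq_zero_of_forall_postcomp_eq_zero fun φ => ?_⟩
    · have hid : ρ ∘ₗ LinearMap.toSpanSingleton R _ u = LinearMap.id := by ext; simp [hρ]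
      rw [← postcomp_id y, ← hid, postcomp_comp, h0, map_zero]
    · have hφ : (φ ∘ₗ (LinearMap.ker g).subtype) ∘ₗ LinearMap.toSpanSingleton R _ u =
          φ ((LinearMap.ker g).subtype u) • LinearMap.id := by
        ext; simp
      rw [← postcomp_comp, ← postcomp_comp, hφ, map_smul, LinearMap.smul_apply, postcomp_id]
      exact smul_ext_residueField_eq_zero (hu φ) y
  | succ i ih =>
    intro Z _ _ _ hZ j n g hg hj
    obtain ⟨m, g', hg'⟩ := exists_isSES_free_cover (R := R) (LinearMap.ker g)
    obtain ⟨x, hx, hx0⟩ := ih (LinearMap.ker g) (hZ.syzygy hg) (j + 1) m g' hg' (by omega)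
    obtain ⟨z, rfl⟩ := hg'.exists_coconnecting_eq hx0
    exact ⟨z, fun hz => hx (by rw [hz, map_zero]),
      (hd j (by omega)).of_projective.eq_zero _⟩

theorem IsTopExtDegree.extVanish_residueField [IsNoetherianRing R] [IsLocalRing R] {n : ℕ}
    [Module.Finite R X] (hX : IsTopExtDegree R n X) :
    ∀ j < n, ExtVanish R (ResidueField R) R j := by
  intro d
  induction d using Nat.strong_induction_on with
  | _ d ih =>
    intro hd
    refine subsingleton_of_forall_eq 0 fun y => by_contra fun hy => ?_
    obtain ⟨Z, _, hZ⟩ := hX.exists_syzygy X (d + 1) (by omega) (by omega)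
    obtain ⟨n, g, hg⟩ := exists_isSES_free_cover (R := R) Z
    obtain ⟨x, hx, hx0⟩ := hZ.exists_ext_residueField_ker hy
      (fun j hj => ih j hj (hj.trans hd)) d Z 0 n g hg (zero_add d)
    exact hx (hg.eq_zero_of_postcomp_left_eq_zero hx0)

/-! ### Test modules for the socle of `Ext` -/

theorem eq_zero_of_forall_smul_eq_zero [IsLocalRing R] (h : ExtVanish R (ResidueField R) A 0)
    {t : A} (ht : ∀ s ∈ maximalIdeal R, s • t = 0) : t = 0 := by
  let l : ResidueField R →ₗ[R] A :=
    Submodule.liftQ (maximalIdeal R) (LinearMap.toSpanSingleton R A t) ht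
  have hl : l = 0 := homToExt.injective ((h.eq_zero _).trans (map_zero homToExt).symm)
  have hl1 : l (residue R 1) = (1 : R) • t := Submodule.liftQ_apply ..
  rwa [hl, LinearMap.zero_apply, one_smul, eq_comm] at hl1

/-- Multiplication by `s` on `A` factors through a finite free module. -/
def FactorsThroughFree (s : R) (A : Type u) [AddCommGroup A] [Module R A] : Prop :=
  ∃ (n : ℕ) (a : A →ₗ[R] (Fin n → R)) (b : (Fin n → R) →ₗ[R] A), ∀ t, b (a t) = s • t

theorem FactorsThroughFree.of_isSES {n : ℕ} {f : A →ₗ[R] (Fin n → R)} {g : (Fin n → R) →ₗ[R] C}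
    (h : IsSES f g) {s : R} {c : (Fin n → R) →ₗ[R] A} (hc : ∀ x, c (f x) = s • x) :
    FactorsThroughFree s C := by
  obtain ⟨a, ha⟩ := h.exists_desc (s • LinearMap.id - f ∘ₗ c) (by simp [hc])
  refine ⟨n, a, g, fun t => ?_⟩
  obtain ⟨y, rfl⟩ := h.2.1 t
  simp [ha, h.apply_apply_eq_zero]

theorem FactorsThroughFree.smul_eq_zero {s : R} (h : FactorsThroughFree s A)
    (x : ExtMod R A Y (j + 1)) : s • x = 0 := by
  obtain ⟨n, a, b, hab⟩ := h
  have hs : s • LinearMap.id = b ∘ₗ a := LinearMap.ext fun t => (hab t).symm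
  rw [← precomp_smul_id, hs, precomp_comp, extVanish_succ_of_projective.eq_zero (precomp b x),
    map_zero]

theorem IsSES.extVanish_right {f : A →ₗ[R] B} {g : B →ₗ[R] C} (h : IsSES f g)
    (hB : ExtVanish R Z B j) (hA : ExtVanish R Z A (j + 1)) : ExtVanish R Z C j := by
  refine subsingleton_of_forall_eq 0 fun x => ?_
  obtain ⟨y, rfl⟩ := h.exists_postcomp_right_eq (x := x) (hA.eq_zero _)
  rw [hB.eq_zero y, map_zero]

/-- `T` represents the socle of `Extⁱ(-, R)` through the class `ζ`: socle elements are pulled back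
from `ζ`, and `ζ` is pulled back from every module of projective dimension `i`. The transpose
`Tr Ωⁱ⁻¹ k` of a syzygy of the residue field is of this kind when `i` is at most the depth `N`
of `R`. -/
structure IsExtTestModule (R : Type u) [CommRing R] [IsLocalRing R] (N i : ℕ) (T : Type u)
    [AddCommGroup T] [Module R T] (ζ : ExtMod R T R i) : Prop where
  finite : Module.Finite R T
  pdLT : PdLT R (i + 1) T
  extVanish : ∀ j, j + 1 ≠ i → ExtVanish R T R (j + 1)
  exists_eq_smul : ∀ x : ExtMod R T R i, ∃ r : R, x = r • ζ
  exists_precomp_eq : ∀ (M : Type u) [AddCommGroup M] [Module R M] [Module.Finite R M],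
    (∀ j, j + 1 < i → ExtVanish R M R (j + 1)) → ∀ ξ : ExtMod R M R i,
    (∀ r ∈ maximalIdeal R, r • ξ = 0) → ∃ f : M →ₗ[R] T, precomp f ζ = ξ
  exists_eq_precomp : ∀ (Y : Type u) [AddCommGroup Y] [Module R Y] [Module.Finite R Y],
    IsTopExtDegree R i Y → ∃ (f : T →ₗ[R] Y) (η : ExtMod R Y R i), precomp f η = ζ
  extVanish_residueField : ∀ j, i + j < N → ExtVanish R (ResidueField R) T j
  factorsThroughFree : ∀ s ∈ maximalIdeal R, FactorsThroughFree s T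

section FirstTestModule

variable {r : ℕ} {x : Fin r → R}

theorem exists_dual_apply_eq {s : R} (hs : s ∈ Ideal.span (Set.range x)) :
    ∃ c : (Fin r → R) →ₗ[R] R, c x = s := by
  obtain ⟨c, hc⟩ := (Submodule.mem_span_range_iff_exists_fun R).1 hs
  exact ⟨∑ l, c l • LinearMap.proj l, by simpa using hc⟩

theorem exists_dual_comp_toSpanSingleton_eq {s : R} (hs : s ∈ Ideal.span (Set.range x)) :
    ∃ c : (Fin r → R) →ₗ[R] R, ∀ a, c (LinearMap.toSpanSingleton R _ x a) = s • a := by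
  obtain ⟨c, rfl⟩ := exists_dual_apply_eq hs
  exact ⟨c, fun a => by simp [mul_comm]⟩

variable {g : (Fin r → R) →ₗ[R] C} (hS : IsSES (LinearMap.toSpanSingleton R _ x) g)

include hS

theorem exists_eq_smul_connecting_id (y : ExtMod R C R 1) :
    ∃ s : R, y = s • hS.connecting (homToExt LinearMap.id) := by
  obtain ⟨z, rfl⟩ := hS.connecting_surjective_of_projective y
  obtain ⟨ψ, rfl⟩ := homToExt.surjective z
  have hψ : ψ = ψ 1 • LinearMap.id := by ext; simp
  exact ⟨ψ 1, by rw [← map_smul, ← map_smul, ← hψ]⟩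

-- The multiples `x l • κ` of a cocycle `κ : K → R` extend to `P` and together form the map
-- `P → Rʳ` which induces `M → C`.
theorem exists_precomp_connecting_id_eq {i : K →ₗ[R] P} {π : P →ₗ[R] M} (hM : IsSES i π)
    [Module.Projective R P] {ξ : ExtMod R M R 1} (hξ : ∀ l, x l • ξ = 0) :
    ∃ f : M →ₗ[R] C, precomp f (hS.connecting (homToExt LinearMap.id)) = ξ := by
  obtain ⟨z, rfl⟩ := hM.connecting_surjective_of_projective ξ
  obtain ⟨κ, rfl⟩ := homToExt.surjective z
  have hext (l : Fin r) : ∃ c : P →ₗ[R] R, ∀ a, c (i a) = x l • κ a := by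
    obtain ⟨y, hy⟩ := hM.exists_precomp_left_eq (x := homToExt (x l • κ))
      (by rw [map_smul, map_smul, hξ])
    obtain ⟨c, rfl⟩ := homToExt.surjective y
    rw [precomp_homToExt] at hy
    exact ⟨c, LinearMap.congr_fun (homToExt.injective hy)⟩
  choose c hc using hext
  obtain ⟨f, -, hf⟩ := hM.exists_connecting_natural hS κ (LinearMap.pi c)
    fun a => by ext l; simp [hc, mul_comm]
  exact ⟨f, by rw [← hf, precomp_homToExt, LinearMap.id_comp]⟩

theorem exists_precomp_eq_connecting_id {n : ℕ} {i : K →ₗ[R] (Fin n → R)}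
    {π : (Fin n → R) →ₗ[R] M} (hM : IsSES i π) {u : K} {ρ : K →ₗ[R] R} (hρ : ρ u = 1)
    (hu : ∀ l, i u l ∈ Ideal.span (Set.range x)) :
    ∃ (f : C →ₗ[R] M) (η : ExtMod R M R 1),
      precomp f η = hS.connecting (homToExt LinearMap.id) := by
  choose c hc using fun l => exists_dual_apply_eq (hu l)
  obtain ⟨f, -, hf⟩ := hS.exists_connecting_natural hM (LinearMap.toSpanSingleton R _ u)
    (LinearMap.pi c) fun a => by ext l; simp [hc]
  have hid : ρ ∘ₗ LinearMap.toSpanSingleton R _ u = LinearMap.id := by ext; simp [hρ]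
  exact ⟨f, hM.connecting (homToExt ρ), by rw [← hf, precomp_homToExt, hid]⟩

theorem isExtTestModule_one [IsNoetherianRing R] [IsLocalRing R]
    (hx : Ideal.span (Set.range x) = maximalIdeal R) {N : ℕ}
    (hd : ∀ j < N, ExtVanish R (ResidueField R) R j) :
    IsExtTestModule R N 1 C (hS.connecting (homToExt LinearMap.id)) where
  finite := .of_surjective g hS.2.1
  pdLT := hS.pdLT_right (.of_projective 0) (.of_projective 1)
  extVanish j hj := by
    obtain ⟨j, rfl⟩ : ∃ i, j = i + 1 := ⟨j - 1, by omega⟩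
    have : ExtVanish R R R (j + 1) := extVanish_succ_of_projective
    exact hS.connecting_surjective_of_projective.subsingleton
  exists_eq_smul := exists_eq_smul_connecting_id hS
  exists_precomp_eq M _ _ _ _ ξ hξ := by
    obtain ⟨n, π, hπ⟩ := exists_isSES_free_cover (R := R) M
    exact exists_precomp_connecting_id_eq hS hπ
      fun l => hξ _ (hx ▸ Ideal.subset_span ⟨l, rfl⟩)
  exists_eq_precomp Y _ _ _ hY := by
    obtain ⟨n, π, hπ⟩ := exists_isSES_free_cover (R := R) Y
    obtain ⟨u, ρ, hρ, hu⟩ := hY.exists_mem_maximalIdeal hπ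
    exact exists_precomp_eq_connecting_id hS hπ hρ fun l => hx ▸ hu (LinearMap.proj l)
  extVanish_residueField j hj :=
    hS.extVanish_right (hd j (by omega)).of_projective (hd _ (by omega))
  factorsThroughFree s hs := by
    obtain ⟨c, hc⟩ := exists_dual_comp_toSpanSingleton_eq (hx ▸ hs)
    exact .of_isSES hS hc

end FirstTestModule

theorem exists_isExtTestModule_one [IsNoetherianRing R] [IsLocalRing R] {N : ℕ} (hN : 1 ≤ N)
    (hd : ∀ j < N, ExtVanish R (ResidueField R) R j) :
    ∃ (T : ModuleCat.{u} R) (ζ : ExtMod R T R 1), IsExtTestModule R N 1 T ζ := by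
  obtain ⟨r, x, hx⟩ := Submodule.fg_iff_exists_fin_generating_family.1
    (IsNoetherian.noetherian (maximalIdeal R))
  have hinj : Function.Injective (LinearMap.toSpanSingleton R _ x) := by
    rw [injective_iff_map_eq_zero]
    refine fun a ha => eq_zero_of_forall_smul_eq_zero (hd 0 hN) fun s hs => ?_
    obtain ⟨c, hc⟩ := exists_dual_comp_toSpanSingleton_eq (x := x) (hx ▸ hs)
    rw [← hc, ha, map_zero]
  have hS := isSES_of_exact hinj (Submodule.mkQ_surjective _)
    (LinearMap.exact_map_mkQ_range (LinearMap.toSpanSingleton R _ x))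
  exact ⟨ModuleCat.of R _, _, isExtTestModule_one hS hx hd⟩

/-- `φ` is a left approximation of `K` by free modules: every linear form on `K` extends
along `φ`. -/
def IsLeftFreeApprox (φ : K →ₗ[R] P) : Prop :=
  ∀ k : K →ₗ[R] R, ∃ c : P →ₗ[R] R, ∀ a, c (φ a) = k a

theorem exists_isLeftFreeApprox [IsNoetherianRing R] [Module.Finite R K] :
    ∃ (r : ℕ) (φ : K →ₗ[R] (Fin r → R)), IsLeftFreeApprox φ := by
  obtain ⟨r, t, ht⟩ := Submodule.fg_iff_exists_fin_generating_family.1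
    (IsNoetherian.noetherian (⊤ : Submodule R (K →ₗ[R] R)))
  refine ⟨r, LinearMap.pi t, fun k => ?_⟩
  have hk : k ∈ Submodule.span R (Set.range t) := ht ▸ Submodule.mem_top
  obtain ⟨c, rfl⟩ := (Submodule.mem_span_range_iff_exists_fun R).1 hk
  exact ⟨∑ l, c l • LinearMap.proj l, by simp⟩

namespace IsLeftFreeApprox

theorem exists_extension {φ : K →ₗ[R] P} (h : IsLeftFreeApprox φ) {n : ℕ}
    (k : K →ₗ[R] (Fin n → R)) : ∃ c : P →ₗ[R] (Fin n → R), ∀ a, c (φ a) = k a := by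
  choose c hc using fun l => h (LinearMap.proj l ∘ₗ k)
  exact ⟨LinearMap.pi c, fun a => funext fun l => hc l a⟩

theorem exists_comp_eq_smul {φ : K →ₗ[R] P} (h : IsLeftFreeApprox φ) {s : R}
    (hs : FactorsThroughFree s K) : ∃ c : P →ₗ[R] K, ∀ a, c (φ a) = s • a := by
  obtain ⟨n, p, q, hpq⟩ := hs
  obtain ⟨c, hc⟩ := h.exists_extension p
  exact ⟨q ∘ₗ c, fun a => by rw [LinearMap.comp_apply, hc, hpq]⟩

theorem injective [IsLocalRing R] {φ : K →ₗ[R] P} (h : IsLeftFreeApprox φ)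
    (hff : ∀ s ∈ maximalIdeal R, FactorsThroughFree s K)
    (hK : ExtVanish R (ResidueField R) K 0) : Function.Injective φ := by
  rw [injective_iff_map_eq_zero]
  refine fun a ha => eq_zero_of_forall_smul_eq_zero hK fun s hs => ?_
  obtain ⟨c, hc⟩ := h.exists_comp_eq_smul (hff s hs)
  rw [← hc, ha, map_zero]

theorem extVanish_one {φ : K →ₗ[R] P} (h : IsLeftFreeApprox φ) [Module.Projective R P]
    {g : P →ₗ[R] C} (hS : IsSES φ g) : ExtVanish R C R 1 := by
  refine subsingleton_of_forall_eq 0 fun y => ?_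
  obtain ⟨z, rfl⟩ := hS.connecting_surjective_of_projective y
  obtain ⟨ψ, rfl⟩ := homToExt.surjective z
  obtain ⟨c, hc⟩ := h ψ
  have hψ : ψ = c ∘ₗ φ := LinearMap.ext fun a => (hc a).symm
  rw [hψ, ← precomp_homToExt, hS.connecting_precomp]

end IsLeftFreeApprox

namespace IsExtTestModule

variable [IsLocalRing R] {n i : ℕ}

theorem smul_eq_zero {ζ : ExtMod R K R (i + 1)} (h : IsExtTestModule R n (i + 1) K ζ) {s : R}
    (hs : s ∈ maximalIdeal R) : s • ζ = 0 :=
  (h.factorsThroughFree s hs).smul_eq_zero ζ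

theorem cosyzygy [IsNoetherianRing R] {ζ : ExtMod R K R (i + 1)}
    (h : IsExtTestModule R n (i + 1) K ζ) (hd : ∀ j < n, ExtVanish R (ResidueField R) R j)
    {r : ℕ} {φ : K →ₗ[R] (Fin r → R)} (hφ : IsLeftFreeApprox φ) {g : (Fin r → R) →ₗ[R] C}
    (hS : IsSES φ g) : IsExtTestModule R n (i + 2) C (hS.connecting ζ) where
  finite := .of_surjective g hS.2.1
  pdLT := hS.pdLT_right h.pdLT (.of_projective _)
  extVanish
  | 0, _ => hφ.extVanish_one hS
  | j + 1, hj =>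
    have := h.extVanish j (by omega)
    hS.connecting_surjective_of_projective.subsingleton
  exists_eq_smul y := by
    obtain ⟨z, rfl⟩ := hS.connecting_surjective_of_projective y
    obtain ⟨s, rfl⟩ := h.exists_eq_smul z
    exact ⟨s, map_smul ..⟩
  exists_precomp_eq M _ _ _ hM ξ hξ := by
    obtain ⟨n, π, hπ⟩ := exists_isSES_free_cover (R := R) M
    obtain ⟨z, rfl⟩ := hπ.connecting_surjective_of_projective ξ
    obtain ⟨κ, rfl⟩ := h.exists_precomp_eq (LinearMap.ker π)
      (fun j hj => hπ.extVanish_left (hM (j + 1) (by omega))) z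
      fun s hs => hπ.connecting_injective_of_projective (by rw [map_smul, hξ s hs, map_zero])
    obtain ⟨b, hb⟩ := hπ.exists_extension (hM 0 (by omega)).of_projective (φ ∘ₗ κ)
    obtain ⟨f, -, hf⟩ := hπ.exists_connecting_natural hS κ b hb
    exact ⟨f, (hf ζ).symm⟩
  exists_eq_precomp Y _ _ _ hY := by
    obtain ⟨n, π, hπ⟩ := exists_isSES_free_cover (R := R) Y
    obtain ⟨κ, η, rfl⟩ := h.exists_eq_precomp _ (hY.syzygy hπ)
    obtain ⟨b, hb⟩ := hφ.exists_extension ((LinearMap.ker π).subtype ∘ₗ κ)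
    obtain ⟨f, -, hf⟩ := hS.exists_connecting_natural hπ κ b hb
    exact ⟨f, hπ.connecting η, (hf η).symm⟩
  extVanish_residueField j hj :=
    hS.extVanish_right (hd j (by omega)).of_projective (h.extVanish_residueField _ (by omega))
  factorsThroughFree s hs := by
    obtain ⟨c, hc⟩ := hφ.exists_comp_eq_smul (h.factorsThroughFree s hs)
    exact .of_isSES hS hc

end IsExtTestModule

theorem exists_isExtTestModule [IsNoetherianRing R] [IsLocalRing R] {N : ℕ}
    (hd : ∀ j < N, ExtVanish R (ResidueField R) R j) (i : ℕ) (hi : i < N) :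
    ∃ (T : ModuleCat.{u} R) (ζ : ExtMod R T R (i + 1)), IsExtTestModule R N (i + 1) T ζ := by
  induction i with
  | zero => exact exists_isExtTestModule_one hi hd
  | succ i ih =>
    obtain ⟨T, ζ, hT⟩ := ih (by omega)
    have := hT.finite
    obtain ⟨r, φ, hφ⟩ := exists_isLeftFreeApprox (R := R) (K := T)
    have hS := isSES_of_exact
      (hφ.injective hT.factorsThroughFree (hT.extVanish_residueField 0 hi))
      (Submodule.mkQ_surjective _) (LinearMap.exact_map_mkQ_range φ)
    exact ⟨ModuleCat.of R _, _, hT.cosyzygy hd hφ hS⟩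

/-! ### Membership of modules with artinian `Ext` -/

/-- The common annihilator of the modules `Extʲ_R(A, R)` with `j ≥ 1`. -/
noncomputable def extAnnihilator (R : Type u) [CommRing R] (A : Type u) [AddCommGroup A]
    [Module R A] : Ideal R :=
  ⨅ j : ℕ, Module.annihilator R (ExtMod R A R (j + 1))

theorem mem_extAnnihilator {s : R} :
    s ∈ extAnnihilator R A ↔ ∀ j, ∀ x : ExtMod R A R (j + 1), s • x = 0 := by
  simp [extAnnihilator, Submodule.mem_iInf, Module.mem_annihilator]

theorem IsSES.extAnnihilator_le [Module.Projective R B] {f : A →ₗ[R] B} {g : B →ₗ[R] C}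
    (h : IsSES f g) : extAnnihilator R C ≤ extAnnihilator R A := fun s hs => by
  rw [mem_extAnnihilator] at hs ⊢
  exact fun j x => h.connecting_injective_of_projective (by rw [map_smul, hs, map_zero])

theorem exists_ne_zero_smul_eq_zero [IsNoetherianRing R] [IsLocalRing R] [Nontrivial L]
    (hL : maximalIdeal R ≤ (Module.annihilator R L).radical) :
    ∃ ξ : L, ξ ≠ 0 ∧ ∀ s ∈ maximalIdeal R, s • ξ = 0 := by
  obtain ⟨p, hp⟩ := associatedPrimes.nonempty R L
  have : p.IsPrime := hp.1
  obtain ⟨-, ξ, hξ⟩ := isAssociatedPrime_iff.1 hp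
  have hann : Module.annihilator R L ≤ p := fun s hs => by
    simpa [hξ] using Module.mem_annihilator.1 hs ξ
  refine ⟨ξ, ?_, fun s hs => ?_⟩
  · rintro rfl
    exact this.ne_top (by simp [hξ])
  · simpa [hξ] using this.isRadical.radical_le_iff.2 hann (hL hs)

theorem IsResolving.mem_of_mem_fiberProd {𝒳 : Set (ModuleCat.{u} R)} (hr : IsResolving R 𝒳)
    {π : P →ₗ[R] C} (hπ : Function.Surjective π) (g : B →ₗ[R] C) (hC : Mem 𝒳 C)
    (hB : Mem 𝒳 (FiberProd π g)) : Mem 𝒳 B := by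
  have hs : IsSES (Submodule.subtype _ : FiberProd π g →ₗ[R] P × B) (π.coprod (-g)) := by
    refine isSES_of_exact Subtype.val_injective (fun c => ?_) fun z => ?_
    · obtain ⟨p, rfl⟩ := hπ c
      exact ⟨(p, 0), by simp⟩
    · simp [add_neg_eq_zero]
  exact hr.mem_of_retract (LinearMap.inr R P B) (LinearMap.snd R P B) (fun _ => rfl)
    (hr.mem_of_isSES hs hB hC)

section FiberProd

variable [Module.Projective R P] {i : K →ₗ[R] P} {π : P →ₗ[R] C}

theorem IsSES.exists_pdLT_fiberProd (h : IsSES i π) (g : B →ₗ[R] C) (hC : ∃ m, PdLT R m C)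
    (hB : ∃ m, PdLT R m B) : ∃ m, PdLT R m (FiberProd π g) := by
  obtain ⟨a, ha⟩ := hC
  obtain ⟨b, hb⟩ := hB
  have hK : PdLT R (a + b + 1) K := h.pdLT_left (.of_projective _) (ha.mono (by omega))
  exact ⟨a + b + 1, (h.fiberProd g).pdLT_middle hK (hb.mono (by omega))⟩

theorem IsSES.precomp_snd_surjective (h : IsSES i π) (g : B →ₗ[R] C)
    (hg : Function.Injective (precomp g : ExtMod R C Y (j + 2) →ₗ[R] ExtMod R B Y (j + 2))) :
    Function.Surjective (precomp (FiberProd.snd π g) :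
      ExtMod R B Y (j + 1) →ₗ[R] ExtMod R (FiberProd π g) Y (j + 1)) := by
  refine fun x => (h.fiberProd g).exists_precomp_right_eq ?_
  apply h.connecting_injective_of_projective
  apply hg
  rw [← h.connecting_fiberProd, (h.fiberProd g).connecting_precomp, map_zero, map_zero]

theorem precomp_snd_precomp (g : B →ₗ[R] C) (x : ExtMod R C Y (j + 1)) :
    precomp (FiberProd.snd π g) (precomp g x) = 0 := by
  have hsq : g ∘ₗ FiberProd.snd π g = π ∘ₗ FiberProd.fst π g :=
    LinearMap.ext fun z => z.condition.symm
  rw [← precomp_comp, hsq, precomp_comp, extVanish_succ_of_projective.eq_zero (precomp π x),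
    map_zero]

end FiberProd

section ExtConcentrated

variable [IsLocalRing R] {i n : ℕ}

/-- `M` has finite projective dimension, and the modules `Extʲ_R(M, R)` with `j ≥ 1` are
annihilated by a power of the maximal ideal and vanish unless `i < j ≤ n`. -/
structure ExtConcentrated (R : Type u) [CommRing R] [IsLocalRing R] (i n : ℕ) (M : Type u)
    [AddCommGroup M] [Module R M] : Prop where
  exists_pdLT : ∃ m, PdLT R m M
  extVanish_of_lt : ∀ j < i, ExtVanish R M R (j + 1)
  extVanish_of_le : ∀ j, n ≤ j → ExtVanish R M R (j + 1)
  le_radical : maximalIdeal R ≤ (extAnnihilator R M).radical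

namespace ExtConcentrated

theorem of_surjective (h : ExtConcentrated R i n M) (hA : ∃ m, PdLT R m A) (f : A →ₗ[R] M)
    (hf : ∀ j, Function.Surjective
      (precomp f : ExtMod R M R (j + 1) →ₗ[R] ExtMod R A R (j + 1))) :
    ExtConcentrated R i n A where
  exists_pdLT := hA
  extVanish_of_lt j hj :=
    have := h.extVanish_of_lt j hj
    (hf j).subsingleton
  extVanish_of_le j hj :=
    have := h.extVanish_of_le j hj
    (hf j).subsingleton
  le_radical := h.le_radical.trans <| Ideal.radical_mono fun s hs => by
    rw [mem_extAnnihilator] at hs ⊢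
    intro j x
    obtain ⟨y, rfl⟩ := hf j x
    rw [← map_smul, hs, map_zero]

theorem succ (h : ExtConcentrated R i n M) (hi : ExtVanish R M R (i + 1)) :
    ExtConcentrated R (i + 1) n M where
  exists_pdLT := h.exists_pdLT
  extVanish_of_lt j hj := by
    rcases Nat.lt_succ_iff_lt_or_eq.1 hj with hj | rfl
    · exact h.extVanish_of_lt j hj
    · exact hi
  extVanish_of_le := h.extVanish_of_le
  le_radical := h.le_radical

theorem projective [IsNoetherianRing R] [Module.Finite R M] (h : ExtConcentrated R n n M) :
    Module.Projective R M := by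
  obtain ⟨m, hm⟩ := h.exists_pdLT
  refine projective_of_extVanish m M (hm.mono (by omega)) fun j => ?_
  rcases lt_or_ge j n with hj | hj
  · exact h.extVanish_of_lt j hj
  · exact h.extVanish_of_le j hj

theorem exists_socle [IsNoetherianRing R] (h : ExtConcentrated R i n M) (j : ℕ)
    [Nontrivial (ExtMod R M R (j + 1))] :
    ∃ ξ : ExtMod R M R (j + 1), ξ ≠ 0 ∧ ∀ s ∈ maximalIdeal R, s • ξ = 0 :=
  exists_ne_zero_smul_eq_zero (h.le_radical.trans (Ideal.radical_mono (iInf_le _ j)))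

end ExtConcentrated

theorem IsExtTestModule.precomp_injective {N : ℕ} {ζ : ExtMod R A R (i + 1)}
    (h : IsExtTestModule R N (i + 1) A ζ) {f : M →ₗ[R] A} (hf : precomp f ζ ≠ 0) :
    Function.Injective (precomp f : ExtMod R A R (j + 1) →ₗ[R] ExtMod R M R (j + 1)) := by
  rcases eq_or_ne j i with rfl | hji
  · rw [injective_iff_map_eq_zero]
    intro x hx
    obtain ⟨r, rfl⟩ := h.exists_eq_smul x
    rw [map_smul] at hx
    exact h.smul_eq_zero (by_contra fun hr => hf ((notMem_maximalIdeal.1 hr).smul_eq_zero.1 hx))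
  · have := h.extVanish j (by omega)
    exact Function.injective_of_subsingleton _

/-- Some test module of degree `i` belongs to `𝒳`. -/
def HasTestModule (𝒳 : Set (ModuleCat.{u} R)) (N i : ℕ) : Prop :=
  ∃ (T : ModuleCat.{u} R) (ζ : ExtMod R T R i), IsExtTestModule R N i T ζ ∧ T ∈ 𝒳

variable [IsNoetherianRing R] {𝒳 : Set (ModuleCat.{u} R)} {N : ℕ}

theorem ExtConcentrated.exists_reduction [Module.Finite R M] (h : ExtConcentrated R i n M)
    (hr : IsResolving R 𝒳) (hT : HasTestModule 𝒳 N (i + 1))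
    [Nontrivial (ExtMod R M R (i + 1))] :
    ∃ (A : ModuleCat.{u} R) (f : A →ₗ[R] M), Module.Finite R A ∧ ExtConcentrated R i n A ∧
      (A ∈ 𝒳 → Mem 𝒳 M) ∧
      Function.Surjective (precomp f : ExtMod R M R (i + 1) →ₗ[R] ExtMod R A R (i + 1)) ∧
      ∃ ξ : ExtMod R M R (i + 1), ξ ≠ 0 ∧ precomp f ξ = 0 := by
  obtain ⟨ξ, hξ, hsoc⟩ := h.exists_socle i
  obtain ⟨T, ζ, hT, hTX⟩ := hT
  obtain ⟨f, rfl⟩ := hT.exists_precomp_eq M (fun j hj => h.extVanish_of_lt j (by omega)) ξ hsoc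
  have := hT.finite
  obtain ⟨k, q, hq⟩ := exists_isSES_free_cover (R := R) T
  have hsurj (j : ℕ) := hq.precomp_snd_surjective f (hT.precomp_injective (j := j + 1) hξ)
  exact ⟨ModuleCat.of R (FiberProd q f), FiberProd.snd q f, inferInstance,
    h.of_surjective (hq.exists_pdLT_fiberProd f ⟨_, hT.pdLT⟩ h.exists_pdLT) _ hsurj,
    hr.mem_of_mem_fiberProd hq.2.1 f hTX, hsurj i, _, hξ, precomp_snd_precomp f ζ⟩

-- Noetherian induction on the kernel of the successive surjections from `E`.
theorem ExtConcentrated.mem_of_forall_succ (hr : IsResolving R 𝒳)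
    (hT : HasTestModule 𝒳 N (i + 1))
    (ih : ∀ (M : Type u) [AddCommGroup M] [Module R M] [Module.Finite R M],
      ExtConcentrated R (i + 1) n M → Mem 𝒳 M)
    {E : Type u} [AddCommGroup E] [Module R E] [IsNoetherian R E] (U : Submodule R E) :
    ∀ (M : Type u) [AddCommGroup M] [Module R M] [Module.Finite R M], ExtConcentrated R i n M →
      ∀ p : E →ₗ[R] ExtMod R M R (i + 1), Function.Surjective p → LinearMap.ker p = U →
      Mem 𝒳 M := by
  induction U using WellFoundedGT.induction with
  | _ U IH =>
    rintro M _ _ _ h p hp rfl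
    cases subsingleton_or_nontrivial (ExtMod R M R (i + 1)) with
    | inl h0 => exact ih M (h.succ h0)
    | inr h0 =>
      obtain ⟨A, f, _, hA, hAM, hf, ξ, hξ, hfξ⟩ := h.exists_reduction hr hT
      refine hAM (IH _ ?_ A hA (precomp f ∘ₗ p) (hf.comp hp) rfl)
      obtain ⟨e, rfl⟩ := hp ξ
      exact SetLike.lt_iff_le_and_exists.2 ⟨LinearMap.ker_le_ker_comp p _, e, hfξ, hξ⟩

theorem ExtConcentrated.mem (hr : IsResolving R 𝒳)
    (hT : ∀ i < n, HasTestModule 𝒳 N (i + 1)) (d : ℕ) : ∀ i, i + d = n →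
    ∀ (M : Type u) [AddCommGroup M] [Module R M] [Module.Finite R M],
      ExtConcentrated R i n M → Mem 𝒳 M := by
  induction d with
  | zero =>
    rintro i rfl M _ _ _ h
    have := h.projective
    exact hr.mem_of_projective
  | succ d ih =>
    intro i hi M _ _ _ h
    exact mem_of_forall_succ hr (hT i (by omega)) (ih (i + 1) (by omega)) _ M h LinearMap.id
      Function.surjective_id rfl

omit [IsNoetherianRing R] in
theorem IsExtTestModule.extConcentrated_fiberProd {ζ : ExtMod R A R (n + 1)}
    (hA : IsExtTestModule R N (n + 1) A ζ) (hY : IsTopExtDegree R (n + 1) Y)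
    (hrad : maximalIdeal R ≤ (extAnnihilator R Y).radical) [Module.Projective R P]
    {k : K →ₗ[R] P} {π : P →ₗ[R] Y} (hπ : IsSES k π) {f : A →ₗ[R] Y} {η : ExtMod R Y R (n + 1)}
    (hη : precomp f η = ζ) : ExtConcentrated R 0 n (FiberProd π f) where
  exists_pdLT := hπ.exists_pdLT_fiberProd f hY.exists_pdLT ⟨_, hA.pdLT⟩
  extVanish_of_lt j hj := by omega
  extVanish_of_le j hj := by
    have hK : ExtVanish R K R (j + 1) := hπ.extVanish_left (hY.extVanish _ (by omega))
    refine subsingleton_of_forall_eq 0 fun x => ?_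
    obtain ⟨y, rfl⟩ := (hπ.fiberProd f).exists_precomp_right_eq (hK.eq_zero (precomp _ x))
    rcases eq_or_ne j n with rfl | hjn
    · obtain ⟨r, rfl⟩ := hA.exists_eq_smul y
      rw [map_smul, ← hη, precomp_snd_precomp, smul_zero]
    · rw [(hA.extVanish j (by omega)).eq_zero y, map_zero]
  le_radical s hs := by
    obtain ⟨a, ha⟩ := hrad hs
    have hK := mem_extAnnihilator.1 (hπ.extAnnihilator_le ha)
    refine ⟨a + 1, mem_extAnnihilator.2 fun j x => ?_⟩
    obtain ⟨y, hy⟩ := (hπ.fiberProd f).exists_precomp_right_eq (x := s ^ a • x)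
      (by rw [map_smul, hK])
    rw [pow_succ', mul_smul, ← hy, ← map_smul, (hA.factorsThroughFree s hs).smul_eq_zero, map_zero]

theorem hasTestModule_of_forall_lt (hr : IsResolving R 𝒳)
    (hd : ∀ j < N, ExtVanish R (ResidueField R) R j) (hn : n < N) [Module.Finite R Y]
    (hY : Mem 𝒳 Y) (hdeg : IsTopExtDegree R (n + 1) Y)
    (hrad : maximalIdeal R ≤ (extAnnihilator R Y).radical)
    (hlow : ∀ i < n, HasTestModule 𝒳 N (i + 1)) (hi : i < n + 1) :
    HasTestModule 𝒳 N (i + 1) := by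
  rcases Nat.lt_succ_iff_lt_or_eq.1 hi with hi | rfl
  · exact hlow i hi
  obtain ⟨T, ζ, hT⟩ := exists_isExtTestModule hd i hn
  have := hT.finite
  obtain ⟨f, η, hη⟩ := hT.exists_eq_precomp Y hdeg
  obtain ⟨k, π, hπ⟩ := exists_isSES_free_cover (R := R) Y
  exact ⟨T, ζ, hT, hr.mem_of_mem_fiberProd hπ.2.1 f hY <|
    ExtConcentrated.mem hr hlow i 0 (zero_add i) _
      (hT.extConcentrated_fiberProd hdeg hrad hπ hη)⟩

theorem hasTestModule (hr : IsResolving R 𝒳) (hd : ∀ j < N, ExtVanish R (ResidueField R) R j)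
    (n : ℕ) (hn : n < N) : ∀ (Y : Type u) [AddCommGroup Y] [Module R Y] [Module.Finite R Y],
    Mem 𝒳 Y → IsTopExtDegree R (n + 1) Y → maximalIdeal R ≤ (extAnnihilator R Y).radical →
    ∀ i < n + 1, HasTestModule 𝒳 N (i + 1) := by
  induction n with
  | zero =>
    intro Y _ _ _ hY hdeg hrad i hi
    exact hasTestModule_of_forall_lt hr hd hn hY hdeg hrad (by simp) hi
  | succ n ih =>
    intro Y _ _ _ hY hdeg hrad i hi
    obtain ⟨k, π, hπ⟩ := exists_isSES_free_cover (R := R) Y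
    have hlow := ih (by omega) (LinearMap.ker π) (hr.mem_syzygy hπ hY) (hdeg.syzygy hπ)
      (hrad.trans (Ideal.radical_mono hπ.extAnnihilator_le))
    exact hasTestModule_of_forall_lt hr hd hn hY hdeg hrad hlow hi

end ExtConcentrated

/-! ### The local theorem -/

section MulFiber

variable {i : K →ₗ[R] P} {π : P →ₗ[R] M}

theorem IsSES.connecting_mulFiber (h : IsSES i π) (x : R) (y : ExtMod R K Y j) :
    (h.fiberProd (x • LinearMap.id)).connecting y = x • h.connecting y := by
  rw [h.connecting_fiberProd, precomp_smul_id]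

variable [Module.Projective R P] (h : IsSES i π) (x : R)

theorem smul_precomp_snd_mulFiber (y : ExtMod R M Y (j + 1)) :
    x • precomp (FiberProd.snd π (x • LinearMap.id)) y = 0 := by
  rw [← map_smul, ← precomp_smul_id, precomp_snd_precomp]

include h

theorem IsSES.mul_self_mem_extAnnihilator_mulFiber :
    x * x ∈ extAnnihilator R (MulFiber π x) := by
  refine mem_extAnnihilator.2 fun j z => ?_
  have hB := h.fiberProd (x • LinearMap.id)
  obtain ⟨y, hy⟩ := hB.exists_precomp_right_eq (x := x • z) <| by
    apply h.connecting_injective_of_projective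
    rw [map_smul, map_smul, ← h.connecting_mulFiber, hB.connecting_precomp, map_zero]
  rw [mul_smul, ← hy, smul_precomp_snd_mulFiber]

theorem IsSES.radical_extAnnihilator_le_mulFiber :
    (extAnnihilator R M).radical ≤ (extAnnihilator R (MulFiber π x)).radical := by
  rintro s ⟨a, ha⟩
  have hK := mem_extAnnihilator.1 (h.extAnnihilator_le ha)
  refine ⟨a + a, mem_extAnnihilator.2 fun j z => ?_⟩
  obtain ⟨y, hy⟩ := (h.fiberProd (x • LinearMap.id)).exists_precomp_right_eq (x := s ^ a • z)
    (by rw [map_smul, hK])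
  rw [pow_add, mul_smul, ← hy, ← map_smul, mem_extAnnihilator.1 ha, map_zero]

theorem IsTopExtDegree.mulFiber [IsNoetherianRing R] [IsLocalRing R] [Module.Finite R M]
    {n : ℕ} (hM : IsTopExtDegree R (n + 1) M) (hx : x ∈ maximalIdeal R) :
    IsTopExtDegree R (n + 1) (MulFiber π x) where
  exists_pdLT := h.exists_pdLT_fiberProd _ hM.exists_pdLT hM.exists_pdLT
  nontrivial := by
    by_contra hB
    rw [not_nontrivial_iff_subsingleton] at hB
    have hle : (⊤ : Submodule R (ExtMod R M R (n + 1))) ≤ maximalIdeal R • ⊤ := fun y _ => by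
      obtain ⟨k, rfl⟩ := (h.fiberProd (x • LinearMap.id)).exists_connecting_eq
        (x := y) (hB.eq_zero _)
      rw [h.connecting_mulFiber]
      exact Submodule.smul_mem_smul hx trivial
    have := hM.nontrivial
    exact top_ne_bot <| Submodule.eq_bot_of_le_smul_of_le_jacobson_bot (maximalIdeal R) _
      Module.Finite.fg_top hle (maximalIdeal_le_jacobson _)
  extVanish j hj := by
    obtain ⟨j, rfl⟩ : ∃ l, j = l + 1 := ⟨j - 1, by omega⟩
    have := hM.extVanish (j + 1) hj
    have := hM.extVanish (j + 2) (by omega)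
    exact (h.precomp_snd_surjective _ (Function.injective_of_subsingleton _)).subsingleton

end MulFiber

section Local

variable [IsNoetherianRing R] [IsLocalRing R] {𝒳 : Set (ModuleCat.{u} R)} {n : ℕ}

theorem exists_maximalIdeal_le_radical_extAnnihilator {p : ModuleCat.{u} R → Prop}
    (hp : ∀ M, p M → ∀ x ∈ maximalIdeal R, ∃ (k : ℕ) (π : (Fin k → R) →ₗ[R] M) (a : ℕ),
      IsSES (LinearMap.ker π).subtype π ∧ p (ModuleCat.of R (MulFiber π (x ^ a))))
    {M : ModuleCat.{u} R} (hM : p M) :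
    ∃ A, p A ∧ maximalIdeal R ≤ (extAnnihilator R A).radical := by
  classical
  obtain ⟨S, hS⟩ := IsNoetherian.noetherian (maximalIdeal R)
  rw [← hS]
  replace hS : ∀ x ∈ S, x ∈ maximalIdeal R := fun x hx => hS ▸ Submodule.subset_span hx
  induction S using Finset.induction_on with
  | empty => exact ⟨M, hM, by simp⟩
  | insert x S _ ih =>
    obtain ⟨A, hA, hSA⟩ := ih fun y hy => hS y (Finset.mem_insert_of_mem hy)
    obtain ⟨k, π, a, hπ, hB⟩ := hp A hA x (hS x (Finset.mem_insert_self x S))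
    refine ⟨_, hB, ?_⟩
    rw [Finset.coe_insert, Submodule.span_insert, sup_le_iff, Submodule.span_singleton_le_iff_mem]
    refine ⟨⟨a + a, ?_⟩, hSA.trans (hπ.radical_extAnnihilator_le_mulFiber _)⟩
    rw [pow_add]
    exact hπ.mul_self_mem_extAnnihilator_mulFiber _

theorem exists_mem_isTopExtDegree_maximalIdeal_le_radical (hr : IsResolving R 𝒳)
    {X : ModuleCat.{u} R} (hX : X ∈ 𝒳) (hdeg : IsTopExtDegree R (n + 1) X) :
    ∃ Y ∈ 𝒳, IsTopExtDegree R (n + 1) Y ∧ maximalIdeal R ≤ (extAnnihilator R Y).radical := by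
  refine (exists_maximalIdeal_le_radical_extAnnihilator
    (p := fun M => M ∈ 𝒳 ∧ IsTopExtDegree R (n + 1) M) ?_ ⟨hX, hdeg⟩).imp
      fun Y ⟨⟨hY, hYdeg⟩, hrad⟩ => ⟨hY, hYdeg, hrad⟩
  rintro M ⟨hM, hMdeg⟩ x hx
  have := hr.fg M hM
  obtain ⟨k, π, hπ⟩ := exists_isSES_free_cover (R := R) M
  rw [← pow_one x] at hx
  exact ⟨k, π, 1, hπ, hr.mem_of_isSES (hπ.fiberProd _) (hr.mem_syzygy hπ hM) hM,
    hMdeg.mulFiber hπ _ hx⟩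

/-- Some power of each element of the maximal ideal acts on `M` through an object of `𝒳`. -/
def PowersFactorThrough (𝒳 : Set (ModuleCat.{u} R)) (M : Type u) [AddCommGroup M]
    [Module R M] : Prop :=
  ∀ x ∈ maximalIdeal R, ∃ a : ℕ, FactorsThrough 𝒳 (x ^ a) M

theorem exists_isTopExtDegree_maximalIdeal_le_radical (hr : IsResolving R 𝒳)
    {M : ModuleCat.{u} R} [Module.Finite R M] (hM : PowersFactorThrough 𝒳 M)
    (hdeg : IsTopExtDegree R (n + 1) M) :
    ∃ A : ModuleCat.{u} R, Module.Finite R A ∧ (A ∈ 𝒳 → M ∈ 𝒳) ∧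
      IsTopExtDegree R (n + 1) A ∧ maximalIdeal R ≤ (extAnnihilator R A).radical := by
  refine (exists_maximalIdeal_le_radical_extAnnihilator
    (p := fun A => Module.Finite R A ∧ (A ∈ 𝒳 → M ∈ 𝒳) ∧ PowersFactorThrough 𝒳 A ∧
      IsTopExtDegree R (n + 1) A) ?_ ⟨‹_›, id, hM, hdeg⟩).imp
      fun A ⟨⟨hAfin, hAM, _, hAdeg⟩, hrad⟩ => ⟨hAfin, hAM, hAdeg, hrad⟩
  rintro B ⟨_, hBM, hB, hBdeg⟩ x hx
  obtain ⟨k, π, hπ⟩ := exists_isSES_free_cover (R := R) B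
  obtain ⟨a, ha⟩ := hB x hx
  have ha : FactorsThrough 𝒳 (x ^ (a + 1)) B :=
    pow_succ x a ▸ (factorIdeal hr B).mul_mem_right x ha
  refine ⟨k, π, a + 1, hπ, ?_, fun hF => hBM (hr.mem_of_mem_mulFiber hπ.2.1 ha hF),
    fun y hy => ?_, hBdeg.mulFiber hπ _ (Ideal.pow_mem_of_mem _ hx _ a.succ_pos)⟩
  · change Module.Finite R (MulFiber π (x ^ (a + 1)))
    infer_instance
  · obtain ⟨b, hb⟩ := hB y hy
    exact ⟨b + b, pow_add y b b ▸ (hb.syzygy hr hπ).of_isSES hr (hπ.fiberProd _) hb⟩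

theorem mem_of_powersFactorThrough (hr : IsResolving R 𝒳) (M : ModuleCat.{u} R)
    [Module.Finite R M] (hM : PowersFactorThrough 𝒳 M)
    (hX : ¬ Module.Free R M → ∃ X ∈ 𝒳, pdim R M ≤ pdim R X ∧ pdim R X ≠ ⊤) : M ∈ 𝒳 := by
  by_cases hfree : Module.Free R M
  · exact hr.mem_of_projective
  obtain ⟨X, hX, hle, htop⟩ := hX hfree
  have := hr.fg X hX
  obtain ⟨m, hm⟩ := exists_pdLT_of_pdim_ne_top (ne_top_of_le_ne_top htop hle)
  obtain ⟨n, hn, hMdeg⟩ := exists_isTopExtDegree_of_not_free hm hfree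
  obtain ⟨N, hnN, hXdeg⟩ := hMdeg.exists_of_pdim_le hn hle htop
  obtain ⟨n, rfl⟩ := Nat.exists_eq_add_of_le' hn
  obtain ⟨N, rfl⟩ := Nat.exists_eq_add_of_le' (hn.trans hnN)
  obtain ⟨Y, hY, hYdeg, hYrad⟩ := exists_mem_isTopExtDegree_maximalIdeal_le_radical hr hX hXdeg
  have := hr.fg Y hY
  have htest := hasTestModule hr hXdeg.extVanish_residueField N N.lt_succ_self Y hY hYdeg hYrad
  obtain ⟨A, _, hAM, hAdeg, hArad⟩ := exists_isTopExtDegree_maximalIdeal_le_radical hr hM hMdeg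
  have hA : ExtConcentrated R 0 (n + 1) A :=
    { exists_pdLT := hAdeg.exists_pdLT
      extVanish_of_lt := fun j hj => by omega
      extVanish_of_le := fun j hj => hAdeg.extVanish _ (by omega)
      le_radical := hArad }
  exact hAM (ExtConcentrated.mem hr (fun i hi => htest i (by omega)) (n + 1) 0 (zero_add _) A hA)

end Local

/-! ### Localization of resolving subcategories -/

section Localization

variable (S : Submonoid R) {𝒳 : Set (ModuleCat.{u} R)}

theorem localizedModule_hom_ext {Q : Type u} [AddCommGroup Q] [Module (Localization S) Q]
    {f g : LocalizedModule S M →ₗ[Localization S] Q}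
    (h : ∀ m : M, f (LocalizedModule.mk m 1) = g (LocalizedModule.mk m 1)) : f = g := by
  ext z
  induction z using LocalizedModule.induction_on with | _ m s
  have hz : LocalizedModule.mk m s = Localization.mk (1 : R) s • LocalizedModule.mk m 1 := by
    simp [LocalizedModule.mk_smul_mk]
  rw [hz, map_smul, map_smul, h]

theorem localizedModule_map_comp (g : N →ₗ[R] P) (f : M →ₗ[R] N) :
    LocalizedModule.map S (g ∘ₗ f) = LocalizedModule.map S g ∘ₗ LocalizedModule.map S f :=
  localizedModule_hom_ext S fun m => by simp

theorem exists_localizedModule_hom_extension [Module (Localization S) Q]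
    [IsScalarTower R (Localization S) Q] (f : M →ₗ[R] Q) :
    ∃ g : LocalizedModule S M →ₗ[Localization S] Q, ∀ m : M, g (LocalizedModule.mk m 1) = f m := by
  have := isLocalizedModule_id S Q (Localization S)
  exact ⟨IsLocalizedModule.mapExtendScalars S (LocalizedModule.mkLinearMap S M)
    (LinearMap.id : Q →ₗ[R] Q) (Localization S) f,
    IsLocalizedModule.map_apply S (LocalizedModule.mkLinearMap S M) LinearMap.id f⟩

theorem IsSES.localizedModule {i : K →ₗ[R] P} {π : P →ₗ[R] M} (h : IsSES i π) :
    IsSES (LocalizedModule.map S i) (LocalizedModule.map S π) :=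
  isSES_of_exact (LocalizedModule.map_injective S i h.1) (LocalizedModule.map_surjective S π h.2.1)
    (LocalizedModule.map_exact S i π h.exact)

theorem IsSES.bijective_of_bijective {i : A →ₗ[R] B} {π : B →ₗ[R] C} (h : IsSES i π)
    {i' : K →ₗ[R] L} {π' : L →ₗ[R] M} (h' : IsSES i' π') {a : A →ₗ[R] K} {b : B →ₗ[R] L}
    {c : C →ₗ[R] M} (hab : i' ∘ₗ a = b ∘ₗ i) (hbc : π' ∘ₗ b = c ∘ₗ π)
    (ha : Function.Bijective a) (hc : Function.Bijective c) : Function.Bijective b :=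
  LinearMap.bijective_of_surjective_of_bijective_of_bijective_of_injective
    (0 : PUnit →ₗ[R] A) i π (0 : C →ₗ[R] PUnit) (0 : PUnit →ₗ[R] K) i' π' (0 : M →ₗ[R] PUnit)
    0 a b c 0 (by simp) hab hbc (by ext) ((LinearMap.exact_zero_iff_injective _ _).2 h.1) h.exact
    ((LinearMap.exact_zero_iff_surjective _ _).2 h.2.1)
    ((LinearMap.exact_zero_iff_injective _ _).2 h'.1) h'.exact
    ((LinearMap.exact_zero_iff_surjective _ _).2 h'.2.1)
    (Function.surjective_to_subsingleton _) ha hc (Function.injective_of_subsingleton _)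

-- The extension of `Z` by `X` is pushed out of a free cover of `Z` along a map to `X` that lifts,
-- up to a denominator, the classifying map of the given extension.
theorem IsSES.exists_equiv_localizedModule [IsNoetherianRing R] [Module.Finite R Z]
    [Module (Localization S) Q] [IsScalarTower R (Localization S) Q]
    {i : LocalizedModule S X →ₗ[Localization S] Q}
    {π : Q →ₗ[Localization S] LocalizedModule S Z} (h : IsSES i π) :
    ∃ (D : ModuleCat.{u} R) (j : X →ₗ[R] D) (ρ : D →ₗ[R] Z) (_ : IsSES j ρ),
      Nonempty (LocalizedModule S D ≃ₗ[Localization S] Q) := by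
  obtain ⟨n, ρ, hρ⟩ := exists_isSES_free_cover (R := R) Z
  have := Module.finitePresentation_of_finite R (LinearMap.ker ρ)
  generalize (LinearMap.ker ρ).subtype = ι at hρ
  obtain ⟨l, hl⟩ := Module.projective_lifting_property π (LocalizedModule.map S ρ) h.2.1
  replace hl (z) : π (l z) = LocalizedModule.map S ρ z := LinearMap.congr_fun hl z
  obtain ⟨φ, hφ⟩ := h.exists_lift (D := LocalizedModule S (LinearMap.ker ρ))
    (l ∘ₗ LocalizedModule.map S ι) fun z => by
      simp [hl, (hρ.localizedModule S).apply_apply_eq_zero]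
  obtain ⟨⟨ψ, s⟩, hψ⟩ := IsLocalizedModule.surj S (LocalizedModule.map S) φ
  let iX := i.restrictScalars R ∘ₗ LocalizedModule.mkLinearMap S X
  let lF := (s : R) • (l.restrictScalars R ∘ₗ LocalizedModule.mkLinearMap S (Fin n → R))
  have hcomm (c) : iX (ψ c) = lF (ι c) := by
    have hψc : LocalizedModule.mk (ψ c) 1 = s • φ (LocalizedModule.mk c 1) := by
      simpa using (LinearMap.congr_fun hψ (LocalizedModule.mk c 1)).symm
    simp [iX, lF, hψc, hφ, Submonoid.smul_def, LinearMap.map_smul_of_tower]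
  obtain ⟨Θ, hΘ⟩ := exists_localizedModule_hom_extension S (FiberCoprod.desc ψ ι iX lF hcomm)
  have hD := hρ.fiberCoprod ψ
  refine ⟨ModuleCat.of R (FiberCoprod ψ ι), _, _, hD, ⟨.ofBijective Θ ?_⟩⟩
  refine (hD.localizedModule S).bijective_of_bijective h (a := LinearMap.id)
    (c := algebraMap R (Localization S) s • LinearMap.id) ?_ ?_ Function.bijective_id
    (IsLocalization.map_units (Localization S) s).smul_bijective
  · exact localizedModule_hom_ext S fun x => by simp [hΘ, iX]
  · refine localizedModule_hom_ext S fun z => ?_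
    obtain ⟨x, y, rfl⟩ := FiberCoprod.exists_eq_inl_add_inr ψ ι z
    simp [hΘ, iX, lF, hl, h.apply_apply_eq_zero, LinearMap.map_smul_of_tower]

/-- The localization of a subcategory `𝒳` at `S`: the modules over `S⁻¹R` that are retracts of
localizations of objects of `𝒳`. -/
def localizedSubcat (𝒳 : Set (ModuleCat.{u} R)) : Set (ModuleCat.{u} (Localization S)) :=
  {N | ∃ X ∈ 𝒳, ∃ (f : N →ₗ[Localization S] LocalizedModule S X)
    (g : LocalizedModule S X →ₗ[Localization S] N), ∀ z, g (f z) = z}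

theorem mem_localizedSubcat_localizedModule (hX : Mem 𝒳 X) :
    Mem (localizedSubcat S 𝒳) (LocalizedModule S X) :=
  ⟨ModuleCat.of R X, hX, LinearMap.id, LinearMap.id, fun _ => rfl⟩

section Retract

variable {M N : Type u} [AddCommGroup M] [Module (Localization S) M] [AddCommGroup N]
  [Module (Localization S) N]

theorem mem_localizedSubcat_of_retract (f : M →ₗ[Localization S] N) (g : N →ₗ[Localization S] M)
    (h : ∀ z, g (f z) = z) (hN : Mem (localizedSubcat S 𝒳) N) : Mem (localizedSubcat S 𝒳) M := by
  obtain ⟨X, hX, a, b, hab⟩ := hN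
  exact ⟨X, hX, a ∘ₗ f, g ∘ₗ b, fun z => (congrArg g (hab (f z))).trans (h z)⟩

theorem mem_localizedSubcat_of_equiv (e : M ≃ₗ[Localization S] N)
    (hN : Mem (localizedSubcat S 𝒳) N) : Mem (localizedSubcat S 𝒳) M :=
  mem_localizedSubcat_of_retract S e.toLinearMap e.symm.toLinearMap e.symm_apply_apply hN

end Retract

namespace IsResolving

theorem mem_localizedSubcat_of_projective (hr : IsResolving R 𝒳) {P : Type u} [AddCommGroup P]
    [Module (Localization S) P] [Module.Finite (Localization S) P]
    [Module.Projective (Localization S) P] : Mem (localizedSubcat S 𝒳) P := by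
  obtain ⟨n, π, hπ⟩ := Module.Finite.exists_fin' (Localization S) P
  obtain ⟨σ, hσ⟩ := Module.projective_lifting_property π LinearMap.id hπ
  let e := (IsLocalizedModule.linearEquiv S (LocalizedModule.mkLinearMap S (Fin n → R))
    (LinearMap.pi fun i => Algebra.linearMap R (Localization S) ∘ₗ LinearMap.proj i))
      |>.extendScalarsOfIsLocalization S (Localization S)
  exact mem_localizedSubcat_of_retract S σ π (LinearMap.congr_fun hσ)
    (mem_localizedSubcat_of_equiv S e.symm
      (mem_localizedSubcat_localizedModule S hr.mem_of_projective))

variable [IsNoetherianRing R]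

theorem mem_localizedSubcat_of_isSES (hr : IsResolving R 𝒳) {A B C : Type u} [AddCommGroup A]
    [Module (Localization S) A] [AddCommGroup B] [Module (Localization S) B] [AddCommGroup C]
    [Module (Localization S) C] {f : A →ₗ[Localization S] B} {g : B →ₗ[Localization S] C}
    (h : IsSES f g) (hA : Mem (localizedSubcat S 𝒳) A) (hC : Mem (localizedSubcat S 𝒳) C) :
    Mem (localizedSubcat S 𝒳) B := by
  obtain ⟨X, hX, a, b, hab⟩ := hA
  obtain ⟨Z, hZ, a', b', hab'⟩ := hC
  obtain ⟨Q, i, π, hs, F, G, hFG⟩ := h.exists_factor_mul (a := 1) (c := 1)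
    (by simpa using hab) (by simpa using hab')
  have := hr.fg Z hZ
  let := Module.compHom Q (algebraMap R (Localization S))
  have : IsScalarTower R (Localization S) Q := .of_algebraMap_smul fun _ _ => rfl
  obtain ⟨D, j, ρ, hD, ⟨e⟩⟩ := hs.exists_equiv_localizedModule S
  refine mem_localizedSubcat_of_retract S F G (by simpa using hFG) ?_
  exact mem_localizedSubcat_of_equiv S e.symm
    (mem_localizedSubcat_localizedModule S (hr.mem_of_isSES hD hX hZ))

theorem localizedSubcat (hr : IsResolving R 𝒳) :
    IsResolving (Localization S) (localizedSubcat S 𝒳) where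
  fg := by
    rintro M ⟨X, hX, f, g, hfg⟩
    have := hr.fg X hX
    exact .of_surjective g fun z => ⟨f z, hfg z⟩
  iso_closed M N := fun ⟨e⟩ hM => mem_localizedSubcat_of_equiv S e.symm hM
  proj_mem M _ _ := hr.mem_localizedSubcat_of_projective S
  summand_closed M N :=
    mem_localizedSubcat_of_retract S (.inl _ M N) (.fst _ M N) fun _ => rfl
  ext_closed A B C f g h hA hC := hr.mem_localizedSubcat_of_isSES S h hA hC
  syzygy_closed := by
    rintro K P M i π h _ _ _ ⟨X, hX, f, g, hfg⟩
    have := hr.fg X hX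
    obtain ⟨n, ρ, hρ⟩ := exists_isSES_free_cover (R := R) X
    obtain ⟨F, G, hFG⟩ := h.exists_syzygy_factor (hρ.localizedModule S) (s := 1)
      (by simpa using hfg)
    exact mem_localizedSubcat_of_retract S F G (by simpa using hFG) <|
      hr.mem_localizedSubcat_of_isSES S isSES_inl_snd
        (mem_localizedSubcat_localizedModule S (hr.mem_syzygy hρ hX))
        (hr.mem_localizedSubcat_of_projective S)

end IsResolving

theorem FactorsThrough.localization {s : R} (h : FactorsThrough 𝒳 s M) :
    FactorsThrough (localizedSubcat S 𝒳) (algebraMap R (Localization S) s)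
      (LocalizedModule S M) := by
  obtain ⟨X, hX, f, g, hfg⟩ := h
  refine ⟨ModuleCat.of _ (LocalizedModule S X), mem_localizedSubcat_localizedModule S hX,
    LocalizedModule.map S f, LocalizedModule.map S g, fun z => ?_⟩
  have : g ∘ₗ f = s • LinearMap.id := LinearMap.ext hfg
  rw [← LinearMap.comp_apply, ← localizedModule_map_comp, this, map_smul, LocalizedModule.map_id,
    algebraMap_smul]
  rfl

theorem exists_factorsThrough_of_mem_localizedSubcat [IsNoetherianRing R]
    (hr : IsResolving R 𝒳) [Module.Finite R M]
    (h : Mem (localizedSubcat S 𝒳) (LocalizedModule S M)) : ∃ s ∈ S, FactorsThrough 𝒳 s M := by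
  obtain ⟨X, hX, f, g, hfg⟩ := h
  have := hr.fg X hX
  have := Module.finitePresentation_of_finite R M
  have := Module.finitePresentation_of_finite R X
  obtain ⟨⟨F, s⟩, hF⟩ := IsLocalizedModule.surj S (LocalizedModule.map S) f
  obtain ⟨⟨G, t⟩, hG⟩ := IsLocalizedModule.surj S (LocalizedModule.map S) g
  replace hfg : g ∘ₗ f = LinearMap.id := LinearMap.ext hfg
  have hGF : LocalizedModule.map S (G ∘ₗ F) = LocalizedModule.map S ((t * s) • LinearMap.id) := by
    rw [localizedModule_map_comp, ← hG, ← hF, LinearMap.smul_comp, LinearMap.comp_smul, hfg,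
      Submonoid.smul_def (t * s), map_smul, LocalizedModule.map_id, ← mul_smul, Submonoid.smul_def]
  obtain ⟨w, hw⟩ := IsLocalizedModule.exists_of_eq (S := S) hGF
  refine ⟨w * (t * s), mul_mem w.2 (mul_mem t.2 s.2), X, hX, F, (w : R) • G, fun m => ?_⟩
  simpa [mul_smul, Submonoid.smul_def] using LinearMap.congr_fun hw m

end Localization

theorem powersFactorThrough_localizedSubcat {𝒳 : Set (ModuleCat.{u} R)} (hr : IsResolving R 𝒳)
    [IsNoetherianRing R] {q : Ideal R} [q.IsPrime] (hq : q ∈ (factorIdeal hr M).minimalPrimes) :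
    PowersFactorThrough (localizedSubcat q.primeCompl 𝒳) (LocalizedModule q.primeCompl M) := by
  intro y hy
  rw [← IsLocalization.AtPrime.map_eq_maximalIdeal q (Localization.AtPrime q),
    ← IsLocalization.AtPrime.radical_map_of_mem_minimalPrimes (Localization.AtPrime q) q _ hq] at hy
  obtain ⟨a, ha⟩ := hy
  have hle : (factorIdeal hr M).map (algebraMap R (Localization.AtPrime q)) ≤
      factorIdeal (hr.localizedSubcat q.primeCompl) (LocalizedModule q.primeCompl M) :=
    Ideal.map_le_iff_le_comap.2 fun s hs => FactorsThrough.localization q.primeCompl hs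
  exact ⟨a, hle ha⟩

end Development

/-- Theorem 4.6: membership criterion for a resolving subcategory contained in `LPD(R)`. -/
theorem mem_resolving_of_LPD_iff [IsNoetherianRing R]
    (𝒳 : Set (ModuleCat.{u} R)) (h𝒳 : IsResolving R 𝒳) (hsub : 𝒳 ⊆ LPDcat R)
    (M : ModuleCat.{u} R) (hM : Module.Finite R M) :
    M ∈ 𝒳 ↔ ∀ p ∈ NF R M, ∃ X ∈ 𝒳, localPdim R p M ≤ localPdim R p X := by
  refine ⟨fun h p _ => ⟨M, h, le_rfl⟩, fun h => ?_⟩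
  by_cases htop : factorIdeal h𝒳 M = ⊤
  · exact FactorsThrough.mem h𝒳 ((Ideal.eq_top_iff_one _).1 htop)
  obtain ⟨q, hq⟩ := Ideal.nonempty_minimalPrimes htop
  have hprime : q.IsPrime := hq.1.1
  have : IsNoetherianRing (Localization.AtPrime q) :=
    IsLocalization.isNoetherianRing q.primeCompl _ inferInstance
  have : Module.FinitePresentation R M := Module.finitePresentation_of_finite R M
  let p : PrimeSpectrum R := ⟨q, hprime⟩
  have hlocal : localizeM R p M ∈ localizedSubcat q.primeCompl 𝒳 := by
    refine mem_of_powersFactorThrough (R := Localization.AtPrime q)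
      (h𝒳.localizedSubcat q.primeCompl) _ (powersFactorThrough_localizedSubcat h𝒳 hq)
      fun hfree => ?_
    obtain ⟨X, hX, hle⟩ := h p hfree
    exact ⟨localizeM R p X, mem_localizedSubcat_localizedModule _ hX, hle, (hsub hX).2 p⟩
  obtain ⟨s, hsq, hs⟩ := exists_factorsThrough_of_mem_localizedSubcat q.primeCompl h𝒳 hlocal
  exact (hsq (hq.1.2 hs)).elim

end ResolvPaper
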